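/- arXiv:0903.4508 — 4 statements merged into one kernel-verified Lean document; each statement's English description precedes it below -/
import Mathlib

section
/- With the uniform initial qubit φ^U on the tree and the half-line walk with s = +1, the distance distribution of the tree walk equals the position distribution of the half-line walk: for all t ≥ 0 and x ∈ ℤ₊, Σ_{g reduced word, |g| = x} Σ_{j=0}^{κ−1} |α_t(g, j)|² = P(X_t = x). -/
noncomputable section

/-- Left multiplication of a reduced word by a letter:
`j · g` removes the first letter if it equals `j`, otherwise prepends `j`. -/
def lmul (j : ℕ) (g : List ℕ) : List ℕ :=
  match g with
  | [] => [j]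
  | k :: rest => if k = j then rest else j :: k :: rest

/-- `g` is a reduced word over the alphabet `{0, …, κ-1}`:
all letters are `< κ` and no two consecutive letters are equal. -/
def WordReduced (κ : ℕ) (g : List ℕ) : Prop :=
  (∀ l ∈ g, l < κ) ∧ g.Chain' (· ≠ ·)

/-- Grover-walk amplitudes on the Cayley tree with initial qubit `φ`:
`alpha κ φ 0 g j = φ j` if `g = e` and `0` otherwise, and
`alpha κ φ (t+1) g j = ∑_{k<κ} (2/κ - δ_{jk}) · alpha κ φ t (j·g) k`. -/
noncomputable def alpha (κ : ℕ) (φ : ℕ → ℂ) : ℕ → List ℕ → ℕ → ℂ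
  | 0, g, j => if g = [] then φ j else 0
  | t + 1, g, j =>
      ∑ k ∈ Finset.range κ, ((2 / (κ : ℂ)) - (if j = k then 1 else 0)) * alpha κ φ t (lmul j g) k

/-- The uniform initial qubit `φ^U(j) = 1/√κ`. -/
noncomputable def phiU (κ : ℕ) : ℕ → ℂ := fun _ => ((1 / Real.sqrt κ : ℝ) : ℂ)

/-- Half-line quantum walk `Ψ_t(x) = (Ψ_t^L(x), Ψ_t^R(x))` with a reflecting wall at the
origin, coin parameters `a`, `b` and wall sign `s`:
`Ψ_0(0) = (1,0)`, `Ψ_0(x) = (0,0)` for `x ≥ 1`, and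
`Ψ_{t+1}^L(x) = a·Ψ_t^L(x+1) − b·Ψ_t^R(x+1)`,
`Ψ_{t+1}^R(x) = b·Ψ_t^L(x−1) + a·Ψ_t^R(x−1)` for `x ≥ 2`,
`Ψ_{t+1}^R(1) = s·Ψ_t^L(0)`, `Ψ_{t+1}^R(0) = 0`. -/
noncomputable def psi (a b s : ℝ) : ℕ → ℕ → ℂ × ℂ
  | 0, x => if x = 0 then (1, 0) else (0, 0)
  | t + 1, x =>
      ((a : ℂ) * (psi a b s t (x + 1)).1 - (b : ℂ) * (psi a b s t (x + 1)).2,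
       if x = 0 then 0
       else if x = 1 then (s : ℂ) * (psi a b s t 0).1
       else (b : ℂ) * (psi a b s t (x - 1)).1 + (a : ℂ) * (psi a b s t (x - 1)).2)

/-- Position distribution `P(X_t = x) = |Ψ_t^L(x)|² + |Ψ_t^R(x)|²`. -/
noncomputable def prob (a b s : ℝ) (t x : ℕ) : ℝ :=
  ‖(psi a b s t x).1‖ ^ 2 + ‖(psi a b s t x).2‖ ^ 2

theorem grover_sum (κ : ℕ) (j : ℕ) (hj : j < κ) (F : ℕ → ℂ) :
    ∑ k ∈ Finset.range κ, ((2 / (κ : ℂ)) - (if j = k then 1 else 0)) * F k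
      = 2 / (κ : ℂ) * ∑ k ∈ Finset.range κ, F k - F j := by
  simp only [sub_mul, Finset.sum_sub_distrib, ← Finset.mul_sum, ite_mul, one_mul, zero_mul]
  rw [Finset.sum_ite_eq, if_pos (Finset.mem_range.2 hj)]

theorem sum_head {M : Type*} [CommRing M] (κ : ℕ) (h : ℕ) (hh : h < κ) (F : ℕ → M) (l : M)
    (hF : ∀ k, k < κ → k ≠ h → F k = l) :
    ∑ k ∈ Finset.range κ, F k = F h + ((κ : M) - 1) * l := by
  rw [← Finset.add_sum_erase _ _ (Finset.mem_range.2 hh)]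
  congr 1
  rw [Finset.sum_congr rfl (g := fun _ => l)]
  · rw [Finset.sum_const, Finset.card_erase_of_mem (Finset.mem_range.2 hh), Finset.card_range,
      nsmul_eq_mul, Nat.cast_sub (by omega)]
    simp
  · intro k hk
    simp only [Finset.mem_erase, Finset.mem_range] at hk
    exact hF k hk.2 hk.1

theorem alpha_psi (κ : ℕ) (hκ : 3 ≤ κ) (a b s q : ℝ) (hs : s ^ 2 = κ) (hs0 : s ≠ 0)
    (hq : q ^ 2 = (κ : ℝ) - 1) (hq0 : q ≠ 0) (hsq : Real.sqrt κ = s)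
    (ha : a = 2 * q / κ) (hb : b = ((κ : ℝ) - 2) / κ) (t : ℕ) :
    (∀ j, j < κ → alpha κ (phiU κ) t [] j = (psi a b 1 t 0).1 / s) ∧
    (∀ h r, h < κ → (∀ l ∈ r, l < κ) → (h :: r).IsChain (· ≠ ·) →
      (alpha κ (phiU κ) t (h :: r) h = (psi a b 1 t (r.length + 1)).2 / (s * q ^ r.length)) ∧
      ∀ j, j < κ → j ≠ h → alpha κ (phiU κ) t (h :: r) j
        = (psi a b 1 t (r.length + 1)).1 / (s * q ^ (r.length + 1))) := by
  have hκ0 : (κ : ℂ) ≠ 0 := by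
    have : κ ≠ 0 := by omega
    exact_mod_cast this
  have hsC : (s : ℂ) ≠ 0 := by exact_mod_cast hs0
  have hqC : (q : ℂ) ≠ 0 := by exact_mod_cast hq0
  have hq2 : (κ : ℂ) - 1 = (q : ℂ) ^ 2 := by exact_mod_cast hq.symm
  have hκq : (κ : ℂ) = (q : ℂ) ^ 2 + 1 := by rw [← hq2]; ring
  have haC : (a : ℂ) = 2 * q / κ := by rw [ha]; push_cast; rfl
  have hbC : (b : ℂ) = (κ - 2) / κ := by rw [hb]; push_cast; rfl
  have hd : (q : ℂ) ^ 2 + 1 ≠ 0 := by rw [← hκq]; exact hκ0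
  induction t with
  | zero =>
    refine ⟨fun j _ => ?_, fun h r _ _ _ => ⟨?_, fun j _ _ => ?_⟩⟩
    · simp [alpha, psi, phiU, hsq]
    · simp [alpha, psi]
    · simp [alpha, psi]
  | succ t ih =>
    obtain ⟨ih0, ih1⟩ := ih
    have key : ∀ j g, j < κ → (∀ l ∈ g, l < κ) → (j :: g).IsChain (· ≠ ·) →
        2 / (κ : ℂ) * ∑ k ∈ Finset.range κ, alpha κ (phiU κ) t (j :: g) k
          - alpha κ (phiU κ) t (j :: g) j
        = ((a : ℂ) * (psi a b 1 t (g.length + 1)).1 - (b : ℂ) * (psi a b 1 t (g.length + 1)).2)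
          / (s * q ^ g.length) := by
      intro j g hj hg hc
      obtain ⟨h1, h2⟩ := ih1 j g hj hg hc
      rw [sum_head κ j hj _ _ h2, h1, hq2, haC, hbC, hκq]
      field_simp
      ring
    refine ⟨fun j hj => ?_, fun h r hh hr hc => ⟨?_, fun j hj hjh => ?_⟩⟩
    · rw [alpha, grover_sum κ j hj, lmul, key j [] hj (by simp) (by simp), psi]
      simp
    · rw [alpha, grover_sum κ h hh, lmul, if_pos rfl]
      cases r with
      | nil =>
        rw [sum_head κ h hh _ _ (fun k hk _ => ih0 k hk), ih0 h hh, psi, hκq]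
        simp
        field_simp
        ring
      | cons k r =>
        have hk : k < κ := hr k (by simp)
        rw [List.isChain_cons_cons] at hc
        obtain ⟨h1, h2⟩ := ih1 k r hk (fun l hl => hr l (by simp [hl])) hc.2
        rw [sum_head κ k hk _ _ h2, h1, h2 h hh hc.1, psi, hq2, haC, hbC, hκq]
        simp
        field_simp
        ring
    · rw [alpha, grover_sum κ j hj, lmul, if_neg (Ne.symm hjh),
        key j (h :: r) hj (by simpa using ⟨hh, hr⟩)
          (by rw [List.isChain_cons_cons]; exact ⟨hjh, hc⟩), psi]
      simp

theorem card_words (κ : ℕ) (n : ℕ) :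
    ((Finset.univ.filter
        (fun f : Fin (n + 1) → Fin κ =>
          (List.ofFn fun i => (f i : ℕ)).IsChain (· ≠ ·))).card : ℝ)
      = κ * ((κ : ℝ) - 1) ^ n := by
  induction n with
  | zero => simp
  | succ n ih =>
    rw [Finset.card_filter] at ih ⊢
    rw [← Equiv.sum_comp (Fin.consEquiv (fun _ => Fin κ)), Fintype.sum_prod_type_right, pow_succ,
      ← mul_assoc, ← ih]
    push_cast
    rw [Finset.sum_mul]
    refine Finset.sum_congr rfl fun f _ => ?_
    by_cases hf : (List.ofFn fun i => (f i : ℕ)).IsChain (· ≠ ·)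
    · rw [if_pos hf, one_mul]
      have : ∀ x : Fin κ, (List.ofFn fun i =>
          (((Fin.consEquiv (fun _ => Fin κ)) (x, f) : Fin (n + 1 + 1) → Fin κ) i : ℕ)).IsChain
            (· ≠ ·) ↔ x ≠ f 0 := by
        intro x
        rw [List.ofFn_succ] at hf
        rw [List.ofFn_succ, List.ofFn_succ, List.isChain_cons_cons]
        simp only [Fin.consEquiv_apply, Fin.cons_zero, Fin.cons_succ]
        constructor
        · rintro ⟨h, _⟩ rfl
          exact h rfl
        · intro h
          exact ⟨fun e => h (Fin.ext e), hf⟩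
      simp only [this]
      rw [Finset.sum_ite]
      simp only [Finset.sum_const, nsmul_eq_mul, mul_one, mul_zero, add_zero]
      rw [Finset.filter_ne' Finset.univ (f 0), Finset.card_erase_of_mem (Finset.mem_univ _),
        Finset.card_univ, Fintype.card_fin, Nat.cast_sub (by have := (f 0).2; omega)]
      simp
    · rw [if_neg hf, zero_mul]
      refine Finset.sum_eq_zero fun x _ => if_neg fun h => hf ?_
      rw [List.ofFn_succ] at h
      simp only [Fin.consEquiv_apply, Fin.cons_succ] at h
      exact h.tail

/-- With the uniform initial qubit `φ^U` on the tree and the half-line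
walk with `s = +1`, the distance distribution of the tree walk equals the position
distribution of the half-line walk: for all `t` and `x`,
`∑_{|g| = x, g reduced} ∑_{j<κ} |α_t(g, j)|² = P(X_t = x)`.
(Reduced words of length `x` are encoded as functions `Fin x → Fin κ` whose associated
list has no two consecutive equal entries.) -/
theorem grover_tree_uniform_distance_distribution
    (κ : ℕ) (hκ : 3 ≤ κ) (a b : ℝ)
    (ha : a = 2 * Real.sqrt ((κ : ℝ) - 1) / κ) (hb : b = ((κ : ℝ) - 2) / κ)
    (t x : ℕ) :
    ∑ f ∈ Finset.univ.filter
        (fun f : Fin x → Fin κ => (List.ofFn fun i => (f i : ℕ)).IsChain (· ≠ ·)),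
      ∑ j ∈ Finset.range κ,
        ‖alpha κ (phiU κ) t (List.ofFn fun i => (f i : ℕ)) j‖ ^ 2
      = prob a b 1 t x := by
  have hκR : (3 : ℝ) ≤ κ := by exact_mod_cast hκ
  have hs : Real.sqrt κ ^ 2 = κ := Real.sq_sqrt (by linarith)
  have hs0 : Real.sqrt κ ≠ 0 := (Real.sqrt_pos.2 (by linarith)).ne'
  have hq : Real.sqrt ((κ : ℝ) - 1) ^ 2 = (κ : ℝ) - 1 := Real.sq_sqrt (by linarith)
  have hq0 : Real.sqrt ((κ : ℝ) - 1) ≠ 0 := (Real.sqrt_pos.2 (by linarith)).ne'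
  obtain ⟨h0, h1⟩ := alpha_psi κ hκ a b _ _ hs hs0 hq hq0 rfl ha hb t
  have hκ0 : (κ : ℝ) ≠ 0 := by linarith
  have hκ1 : (κ : ℝ) - 1 ≠ 0 := by linarith
  cases x with
  | zero =>
    have hR : (psi a b 1 t 0).2 = 0 := by cases t <;> simp [psi]
    have hsum : ∑ j ∈ Finset.range κ, ‖alpha κ (phiU κ) t [] j‖ ^ 2
        = ‖(psi a b 1 t 0).1‖ ^ 2 := by
      rw [Finset.sum_congr rfl (g := fun _ => ‖(psi a b 1 t 0).1‖ ^ 2 / κ)]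
      · rw [Finset.sum_const, Finset.card_range, nsmul_eq_mul]
        field_simp
      · intro j hj
        rw [h0 j (Finset.mem_range.1 hj), norm_div, div_pow, Complex.norm_real, Real.norm_eq_abs,
          sq_abs, hs]
    simp [prob, hR, hsum]
  | succ n =>
    have hterm : ∀ f ∈ Finset.univ.filter
        (fun f : Fin (n + 1) → Fin κ => (List.ofFn fun i => (f i : ℕ)).IsChain (· ≠ ·)),
        ∑ j ∈ Finset.range κ, ‖alpha κ (phiU κ) t (List.ofFn fun i => (f i : ℕ)) j‖ ^ 2
          = prob a b 1 t (n + 1) / (κ * ((κ : ℝ) - 1) ^ n) := by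
      intro f hf
      have hc := (Finset.mem_filter.1 hf).2
      rw [List.ofFn_succ] at hc ⊢
      obtain ⟨hr, hl⟩ := h1 _ _ (f 0).2 (by
        intro l hl
        rw [List.mem_ofFn] at hl
        obtain ⟨i, rfl⟩ := hl
        exact (f _).2) hc
      rw [List.length_ofFn] at hr hl
      rw [sum_head κ _ (f 0).2 _
        (‖(psi a b 1 t (n + 1)).1‖ ^ 2 / (κ * ((κ : ℝ) - 1) ^ (n + 1))) ?_, hr, prob]
      · simp only [norm_div, norm_mul, norm_pow, Complex.norm_real, Real.norm_eq_abs, div_pow,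
          mul_pow, sq_abs, hs, ← pow_mul]
        rw [mul_comm n 2, pow_mul, sq_abs, hq]
        field_simp
        ring
      · intro k hk hkne
        rw [hl k hk hkne]
        simp only [norm_div, norm_mul, norm_pow, Complex.norm_real, Real.norm_eq_abs, div_pow,
          mul_pow, sq_abs, hs, ← pow_mul]
        rw [mul_comm (n + 1) 2, pow_mul, sq_abs, hq]
    rw [Finset.sum_congr rfl hterm, Finset.sum_const, nsmul_eq_mul, card_words]
    field_simp

end
end

section
/- With the weighted uniform initial qubit φ^WU on the tree and the half-line walk with s = −1, the distance distribution of the tree walk equals the position distribution of the half-line walk: for all t ≥ 0 and x ∈ ℤ₊, Σ_{g reduced word, |g| = x} Σ_{j=0}^{κ−1} |α_t(g, j)|² = P(X_t = x). -/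
noncomputable section

/-- `ω = exp(2πi/κ)`. -/
noncomputable def omega (κ : ℕ) : ℂ := Complex.exp (2 * Real.pi * Complex.I / κ)

/-- The weighted uniform initial qubit `φ^WU(j) = ω^j/√κ`. -/
noncomputable def phiWU (κ : ℕ) : ℕ → ℂ := fun j => omega κ ^ j / ((Real.sqrt κ : ℝ) : ℂ)

lemma gsum_aux (κ : ℕ) (p j : ℕ) (hp : p < κ) (hj : j < κ) (r l c : ℂ) :
    ∑ k ∈ Finset.range κ, ((2 / (κ : ℂ)) - (if j = k then 1 else 0)) * (c * (if p = k then r else l))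
      = c * ((2 / (κ : ℂ)) * (r + ((κ : ℂ) - 1) * l) - (if p = j then r else l)) := by
  have h1 : ∑ k ∈ Finset.range κ, (if p = k then r else l) = r + ((κ : ℂ) - 1) * l := by
    have : ∀ k ∈ Finset.range κ, (if p = k then r else l) = l + (if p = k then r - l else 0) := by
      intro k _
      split_ifs <;> ring
    rw [Finset.sum_congr rfl this, Finset.sum_add_distrib, Finset.sum_ite_eq]
    simp [hp]
    ring
  have h2 : ∑ k ∈ Finset.range κ, (if j = k then (if p = k then r else l) else 0)
      = (if p = j then r else l) := by
    rw [Finset.sum_ite_eq]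
    simp [hj]
  rw [← h1, ← h2, Finset.mul_sum, ← Finset.sum_sub_distrib, Finset.mul_sum]
  refine Finset.sum_congr rfl fun k _ => ?_
  split_ifs <;> ring

lemma omega_sum (κ : ℕ) (hκ : 3 ≤ κ) : ∑ k ∈ Finset.range κ, omega κ ^ k = 0 :=
  (Complex.isPrimitiveRoot_exp κ (by omega)).geom_sum_eq_zero (by omega)

lemma omega_norm (κ : ℕ) : ‖omega κ‖ = 1 := by
  have : omega κ = Complex.exp (((2 * Real.pi / κ : ℝ) : ℂ) * Complex.I) := by
    unfold omega
    congr 1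
    push_cast
    ring
  rw [this, Complex.norm_exp_ofReal_mul_I]

lemma alpha_formula (κ : ℕ) (hκ : 3 ≤ κ) (a b q : ℝ)
    (hq : q ≠ 0) (hq2 : (q : ℂ) ^ 2 = (κ : ℂ) - 1)
    (ha : (a : ℂ) = 2 * q / κ) (hb : (b : ℂ) = ((κ : ℂ) - 2) / κ) (t : ℕ) :
    ∀ (g : List ℕ), (∀ l ∈ g, l < κ) → g.IsChain (· ≠ ·) → ∀ j, j < κ →
      alpha κ (phiWU κ) t g j =
        omega κ ^ (g.getLastD j) / ((Real.sqrt κ : ℝ) : ℂ) *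
          (if g.head? = some j then (psi a b (-1) t g.length).2 / (q : ℂ) ^ (g.length - 1)
            else (psi a b (-1) t g.length).1 / (q : ℂ) ^ g.length) := by
  have hqc : (q : ℂ) ≠ 0 := by exact_mod_cast hq
  have hκc : (κ : ℂ) ≠ 0 := by
    have : κ ≠ 0 := by omega
    exact_mod_cast this
  induction t with
  | zero =>
    intro g _ _ j _
    cases g with
    | nil => simp [alpha, psi, phiWU]
    | cons k rest => simp [alpha, psi]
  | succ t ih =>
    intro g hg hc j hj
    -- outward source
    have up : ∀ h : List ℕ, (∀ l ∈ j :: h, l < κ) → (j :: h).IsChain (· ≠ ·) →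
        ∑ k ∈ Finset.range κ, ((2 / (κ : ℂ)) - (if j = k then 1 else 0)) *
            alpha κ (phiWU κ) t (j :: h) k =
          omega κ ^ (h.getLastD j) / ((Real.sqrt κ : ℝ) : ℂ) *
            (((a : ℂ) * (psi a b (-1) t (h.length + 1)).1
              - (b : ℂ) * (psi a b (-1) t (h.length + 1)).2) / (q : ℂ) ^ h.length) := by
      intro h h1 h2
      rw [Finset.sum_congr rfl fun k hk => by
        rw [ih (j :: h) h1 h2 k (Finset.mem_range.1 hk)]]
      simp only [List.head?_cons, Option.some.injEq, List.length_cons, List.getLastD_cons,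
        Nat.add_sub_cancel]
      rw [gsum_aux κ j j hj hj, if_pos rfl, ← hq2, ha, hb]
      congr 1
      field_simp
      ring
    rw [alpha]
    cases g with
    | nil =>
      simp only [lmul]
      rw [up [] (by simpa using hj) (by simp)]
      simp [psi]
    | cons p rest =>
      by_cases hpj : p = j
      · subst hpj
        simp only [lmul, if_true]
        have hr : ∀ l ∈ rest, l < κ := fun l hl => hg l (List.mem_cons_of_mem _ hl)
        have hrc : rest.IsChain (· ≠ ·) := hc.tail
        rw [Finset.sum_congr rfl fun k hk => by
          rw [ih rest hr hrc k (Finset.mem_range.1 hk)]]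
        cases rest with
        | nil =>
          have hs := omega_sum κ hκ
          simp only [List.head?_nil, List.getLastD_nil, List.head?_cons, List.getLastD_cons,
            reduceCtorEq, if_false, if_true, List.length_nil, List.length_cons, psi]
          have e : ∀ k ∈ Finset.range κ,
              ((2 / (κ : ℂ)) - (if p = k then 1 else 0)) *
                (omega κ ^ k / ((Real.sqrt κ : ℝ) : ℂ) * ((psi a b (-1) t 0).1 / (q : ℂ) ^ 0))
              = (2 / (κ : ℂ) / ((Real.sqrt κ : ℝ) : ℂ) * (psi a b (-1) t 0).1) * omega κ ^ k
                - (if p = k then omega κ ^ k / ((Real.sqrt κ : ℝ) : ℂ) * (psi a b (-1) t 0).1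
                    else 0) := by
            intro k _
            split_ifs <;> simp <;> ring
          rw [Finset.sum_congr rfl e, Finset.sum_sub_distrib, ← Finset.mul_sum, hs,
            Finset.sum_ite_eq]
          simp [hj]
        | cons m rest' =>
          have hm : m < κ := hr m (by simp)
          have hne : p ≠ m := by
            simp only [List.isChain_cons_cons] at hc
            exact hc.1
          simp only [List.head?_cons, Option.some.injEq, List.length_cons, List.getLastD_cons,
            Nat.add_sub_cancel]
          rw [gsum_aux κ m p hm hj, if_neg (Ne.symm hne), if_pos trivial, psi, if_neg (by omega),
            if_neg (by omega), ← hq2, ha, hb]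
          simp only [Nat.add_sub_cancel]
          congr 1
          have : (κ : ℂ) = q ^ 2 + 1 := by rw [hq2]; ring
          have h3 : (q : ℂ) ^ 2 + 1 ≠ 0 := this ▸ hκc
          rw [this]
          field_simp
          ring
      · simp only [lmul, if_neg hpj]
        have h1 : ∀ l ∈ j :: p :: rest, l < κ := by
          intro l hl
          rcases List.mem_cons.1 hl with h | h
          · exact h ▸ hj
          · exact hg l h
        rw [up (p :: rest) h1 (List.isChain_cons_cons.2 ⟨Ne.symm hpj, hc⟩)]
        simp [psi, hpj]

lemma count_aux (κ : ℕ) (n : ℕ) : ∀ k : Fin κ,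
    (Finset.univ.filter (fun f : Fin n → Fin κ =>
      ((k : ℕ) :: List.ofFn fun i => (f i : ℕ)).IsChain (· ≠ ·))).card = (κ - 1) ^ n := by
  induction n with
  | zero => intro k; simp
  | succ n ih =>
    intro k
    rw [Finset.card_filter, ← (Fin.consEquiv (fun _ : Fin (n + 1) => Fin κ)).sum_comp,
      Fintype.sum_prod_type]
    have e : ∀ c : Fin κ, ∑ f : Fin n → Fin κ,
        (if ((k : ℕ) :: List.ofFn fun i => ((Fin.consEquiv (fun _ : Fin (n + 1) => Fin κ)
          (c, f)) i : ℕ)).IsChain (· ≠ ·) then 1 else 0)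
        = if k = c then 0 else (κ - 1) ^ n := by
      intro c
      rw [← ih c, Finset.card_filter]
      by_cases h : k = c
      · subst h
        simp [List.ofFn_succ, Fin.consEquiv]
      · have h' : (k : ℕ) ≠ c := fun h2 => h (Fin.ext h2)
        simp [List.ofFn_succ, Fin.consEquiv, h, h']
    rw [Finset.sum_congr rfl fun c _ => e c]
    rw [Finset.sum_ite]
    simp [Finset.filter_ne, pow_succ, mul_comm]

lemma count_main (κ : ℕ) (n : ℕ) :
    (Finset.univ.filter (fun f : Fin (n + 1) → Fin κ =>
      (List.ofFn fun i => (f i : ℕ)).IsChain (· ≠ ·))).card = κ * (κ - 1) ^ n := by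
  rw [Finset.card_filter, ← (Fin.consEquiv (fun _ : Fin (n + 1) => Fin κ)).sum_comp,
      Fintype.sum_prod_type]
  have e : ∀ c : Fin κ, ∑ f : Fin n → Fin κ,
      (if (List.ofFn fun i => ((Fin.consEquiv (fun _ : Fin (n + 1) => Fin κ)
        (c, f)) i : ℕ)).IsChain (· ≠ ·) then 1 else 0) = (κ - 1) ^ n := by
    intro c
    rw [← count_aux κ n c, Finset.card_filter]
    simp [List.ofFn_succ, Fin.consEquiv]
  rw [Finset.sum_congr rfl fun c _ => e c]
  simp

/-- With the weighted uniform initial qubit `φ^WU` on the tree and the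
half-line walk with `s = −1`, the distance distribution of the tree walk equals the
position distribution of the half-line walk: for all `t` and `x`,
`∑_{|g| = x, g reduced} ∑_{j<κ} |α_t(g, j)|² = P(X_t = x)`.
(Reduced words of length `x` are encoded as functions `Fin x → Fin κ` whose associated
list has no two consecutive equal entries.) -/
theorem grover_tree_weighted_distance_distribution
    (κ : ℕ) (hκ : 3 ≤ κ) (a b : ℝ)
    (ha : a = 2 * Real.sqrt ((κ : ℝ) - 1) / κ) (hb : b = ((κ : ℝ) - 2) / κ)
    (t x : ℕ) :
    ∑ f ∈ Finset.univ.filter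
        (fun f : Fin x → Fin κ => (List.ofFn fun i => (f i : ℕ)).IsChain (· ≠ ·)),
      ∑ j ∈ Finset.range κ,
        ‖alpha κ (phiWU κ) t (List.ofFn fun i => (f i : ℕ)) j‖ ^ 2
      = prob a b (-1) t x := by
  have hκr : (3 : ℝ) ≤ κ := by exact_mod_cast hκ
  have hκ0 : (κ : ℝ) ≠ 0 := by linarith
  obtain ⟨q, hqdef⟩ : ∃ q, q = Real.sqrt ((κ : ℝ) - 1) := ⟨_, rfl⟩
  have hqpos : 0 < q := by rw [hqdef]; exact Real.sqrt_pos.2 (by linarith)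
  have hq2 : q ^ 2 = (κ : ℝ) - 1 := by rw [hqdef]; exact Real.sq_sqrt (by linarith)
  rw [← hqdef] at ha
  have key := alpha_formula κ hκ a b q hqpos.ne' (by exact_mod_cast congrArg Complex.ofReal hq2)
    (by rw [ha]; push_cast; ring) (by rw [hb]; push_cast; ring) t
  have hsq : ‖((Real.sqrt κ : ℝ) : ℂ)‖ ^ 2 = κ := by
    rw [Complex.norm_real, Real.norm_eq_abs, sq_abs, Real.sq_sqrt (by linarith)]
  have hqn : ‖(q : ℂ)‖ = q := by
    rw [Complex.norm_real, Real.norm_eq_abs, abs_of_pos hqpos]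
  cases x with
  | zero =>
    have hR : (psi a b (-1) t 0).2 = 0 := by
      cases t <;> simp [psi]
    have e : ∀ j ∈ Finset.range κ, ‖alpha κ (phiWU κ) t [] j‖ ^ 2
        = ‖(psi a b (-1) t 0).1‖ ^ 2 / κ := by
      intro j hj
      rw [key [] (by simp) (by simp) j (Finset.mem_range.1 hj)]
      simp only [List.head?_nil, reduceCtorEq, if_false, List.length_nil, pow_zero, div_one,
        norm_mul, norm_div, norm_pow, omega_norm, one_pow, mul_pow, div_pow, hsq]
      ring
    simp only [List.ofFn_zero]
    rw [Finset.sum_congr rfl fun f _ => Finset.sum_congr rfl e]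
    simp [prob, hR]
    field_simp
  | succ n =>
    have e : ∀ f ∈ Finset.univ.filter
        (fun f : Fin (n + 1) → Fin κ => (List.ofFn fun i => (f i : ℕ)).IsChain (· ≠ ·)),
        ∑ j ∈ Finset.range κ, ‖alpha κ (phiWU κ) t (List.ofFn fun i => (f i : ℕ)) j‖ ^ 2
        = prob a b (-1) t (n + 1) / (κ * ((κ : ℝ) - 1) ^ n) := by
      intro f hf
      have hf' := (Finset.mem_filter.1 hf).2
      have hlt : ∀ l ∈ (List.ofFn fun i => (f i : ℕ)), l < κ := by
        intro l hl
        obtain ⟨i, rfl⟩ := (List.mem_ofFn' _ _).1 hl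
        exact (f i).2
      have e1 : ∀ j ∈ Finset.range κ,
          ‖alpha κ (phiWU κ) t (List.ofFn fun i => (f i : ℕ)) j‖ ^ 2
          = ‖(psi a b (-1) t (n + 1)).1‖ ^ 2 / (κ * ((κ : ℝ) - 1) ^ (n + 1)) +
            (if (f 0 : ℕ) = j then ‖(psi a b (-1) t (n + 1)).2‖ ^ 2 / (κ * ((κ : ℝ) - 1) ^ n)
              - ‖(psi a b (-1) t (n + 1)).1‖ ^ 2 / (κ * ((κ : ℝ) - 1) ^ (n + 1)) else 0) := by
        intro j hj
        rw [key _ hlt hf' j (Finset.mem_range.1 hj), List.length_ofFn, ← hq2, ← pow_mul, ← pow_mul]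
        have hh : (List.ofFn fun i => (f i : ℕ)).head? = some (f 0 : ℕ) := by
          simp [List.ofFn_succ]
        rw [hh]
        simp only [Option.some.injEq, Nat.add_sub_cancel]
        split_ifs
        · simp only [norm_mul, norm_div, norm_pow, omega_norm, one_pow, mul_pow, div_pow, hsq, hqn,
            ← pow_mul]
          rw [mul_comm n 2]
          ring
        · simp only [norm_mul, norm_div, norm_pow, omega_norm, one_pow, mul_pow, div_pow, hsq, hqn,
            ← pow_mul]
          rw [mul_comm (n + 1) 2]
          ring
      rw [Finset.sum_congr rfl e1, Finset.sum_add_distrib, Finset.sum_ite_eq,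
        if_pos (Finset.mem_range.2 (f 0).2)]
      have h1 : (κ : ℝ) - 1 ≠ 0 := by linarith
      simp only [Finset.sum_const, Finset.card_range, nsmul_eq_mul, prob]
      field_simp
      ring
    rw [Finset.sum_congr rfl e, Finset.sum_const, count_main, nsmul_eq_mul]
    have h1 : (κ : ℝ) - 1 ≠ 0 := by linarith
    rw [Nat.cast_mul, Nat.cast_pow, Nat.cast_sub (by omega), Nat.cast_one]
    field_simp

end
end

section
/- In Case (A) (s = +1) there is no localization: for every x ∈ ℤ₊, lim_{t→∞} P(X_{2t} = x) = 0 and lim_{t→∞} P(X_{2t+1} = x) = 0. -/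
open Filter Topology

noncomputable section

open PowerSeries in
/-- Absolutely summable coefficients with sum `v`. -/
def AbsSum (f : PowerSeries ℂ) (v : ℂ) : Prop :=
  (Summable fun n => ‖coeff n f‖) ∧ HasSum (fun n => coeff n f) v

open PowerSeries

theorem AbsSum.mul {f g : PowerSeries ℂ} {u v : ℂ} (hf : AbsSum f u) (hg : AbsSum g v) :
    AbsSum (f * g) (u * v) := by
  have h := summable_norm_sum_mul_antidiagonal_of_summable_norm hf.1 hg.1
  have h2 := tsum_mul_tsum_eq_tsum_sum_antidiagonal_of_summable_norm hf.1 hg.1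
  refine ⟨by simpa only [coeff_mul] using h, ?_⟩
  simp only [coeff_mul]
  rw [← hf.2.tsum_eq, ← hg.2.tsum_eq, h2]
  exact h.of_norm.hasSum

theorem AbsSum.add {f g : PowerSeries ℂ} {u v : ℂ} (hf : AbsSum f u) (hg : AbsSum g v) :
    AbsSum (f + g) (u + v) := by
  refine ⟨?_, by simpa only [map_add] using hf.2.add hg.2⟩
  refine Summable.of_nonneg_of_le (fun _ => norm_nonneg _) (fun n => ?_) (hf.1.add hg.1)
  rw [map_add]; exact norm_add_le _ _

theorem absSum_C (c : ℂ) : AbsSum (C c) c := by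
  constructor
  · refine summable_of_ne_finset_zero (s := {0}) (fun n hn => ?_)
    simp only [Finset.mem_singleton] at hn
    simp [coeff_C, hn]
  · have := hasSum_single (f := fun n => coeff n (C c)) 0 (fun n hn => by simp [coeff_C, hn])
    simpa using this

theorem absSum_X : AbsSum (X : PowerSeries ℂ) 1 := by
  constructor
  · refine summable_of_ne_finset_zero (s := {1}) (fun n hn => ?_)
    simp only [Finset.mem_singleton] at hn
    simp [coeff_X, hn]
  · have := hasSum_single (f := fun n => coeff n (X : PowerSeries ℂ)) 1
      (fun n hn => by simp [coeff_X, hn])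
    simpa using this

/-- Scaled Catalan series. -/
def catK : PowerSeries ℂ := rescale (1 / 4 : ℂ) (map (Nat.castRingHom ℂ) catalanSeries)

theorem catK_eq : catK ^ 2 * (C (1/4 : ℂ) * X) + 1 = catK := by
  have h := congrArg (fun f => rescale (1 / 4 : ℂ) (map (Nat.castRingHom ℂ) f))
    catalanSeries_sq_mul_X_add_one
  simpa [catK, rescale_X] using h

theorem coeff_catK (n : ℕ) : coeff n catK = (((catalan n : ℝ) / 4 ^ n : ℝ) : ℂ) := by
  simp [catK, coeff_rescale, catalanSeries]
  ring

theorem catalan_partial (n : ℕ) : ∑ k ∈ Finset.range n, (catalan k : ℝ) / 4 ^ k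
    = 2 - 2 * (n.centralBinom : ℝ) / 4 ^ n := by
  induction n with
  | zero => simp
  | succ n ih =>
    rw [Finset.sum_range_succ, ih]
    have h1 : ((n : ℝ) + 1) * catalan n = n.centralBinom := by
      exact_mod_cast succ_mul_catalan_eq_centralBinom n
    have h2 : ((n : ℝ) + 1) * (n + 1).centralBinom = 2 * (2 * n + 1) * n.centralBinom := by
      exact_mod_cast Nat.succ_mul_centralBinom_succ n
    have h3 : ((n + 1).centralBinom : ℝ) = 2 * (2 * n + 1) * catalan n := by
      have : (n : ℝ) + 1 ≠ 0 := by positivity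
      apply mul_left_cancel₀ this
      rw [h2, ← h1]; ring
    rw [h3, ← h1, pow_succ]
    field_simp
    ring

theorem catalan_summable : Summable fun k => (catalan k : ℝ) / 4 ^ k := by
  refine summable_of_sum_range_le (c := 2) (fun n => by positivity) (fun n => ?_)
  rw [catalan_partial]
  have : 0 ≤ 2 * (n.centralBinom : ℝ) / 4 ^ n := by positivity
  linarith

/-- Power series of `sqrt (1 - w X)`. -/
def sqSer (w : ℂ) : PowerSeries ℂ := rescale w (1 - C (1/2 : ℂ) * X * catK)

theorem sqSer_sq (w : ℂ) : sqSer w * sqSer w = 1 - C w * X := by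
  have h : (1 - C (1/2 : ℂ) * X * catK) * (1 - C (1/2 : ℂ) * X * catK) = 1 - X := by
    have h2 : (C (1/2 : ℂ) : PowerSeries ℂ) * 2 = 1 := by
      rw [show (2 : PowerSeries ℂ) = C 2 from (map_ofNat _ 2).symm, ← map_mul]; norm_num
    have h4 : (C (1/4 : ℂ) : PowerSeries ℂ) = C (1/2) * C (1/2) := by
      rw [← map_mul]; norm_num
    have h := catK_eq
    rw [h4] at h
    linear_combination X * h - X * catK * h2
  rw [sqSer, ← map_mul, h]
  simp [rescale_X]

theorem constantCoeff_sqSer (w : ℂ) : constantCoeff (sqSer w) = 1 := by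
  rw [← coeff_zero_eq_constantCoeff_apply, sqSer, coeff_rescale]
  simp

theorem catK_rescale_absSum (w : ℂ) (hw : ‖w‖ = 1) :
    ∃ v, AbsSum (rescale w catK) v ∧ AbsSum (rescale (star w) catK) (star v) := by
  have hs : ∀ w : ℂ, ‖w‖ = 1 → Summable fun n => ‖coeff n (rescale w catK)‖ := by
    intro w hw
    refine catalan_summable.congr (fun n => ?_)
    rw [coeff_rescale, coeff_catK, norm_mul, norm_pow, hw, Complex.norm_real, one_pow, one_mul,
      Real.norm_of_nonneg (by positivity)]
  have h1 := (hs w hw).of_norm.hasSum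
  refine ⟨_, ⟨hs w hw, h1⟩, hs _ (by rw [norm_star, hw]), ?_⟩
  have e : (fun n => coeff n (rescale (star w) catK)) =
      fun n => star (coeff n (rescale w catK)) := by
    funext n
    rw [coeff_rescale, coeff_rescale, coeff_catK, star_mul', star_pow]
    congr 1
    exact (Complex.conj_ofReal _).symm
  rw [e]
  exact h1.star

theorem sqSer_absSum (w : ℂ) (hw : ‖w‖ = 1) :
    ∃ v, AbsSum (sqSer w) v ∧ AbsSum (sqSer (star w)) (star v) := by
  obtain ⟨v, h1, h2⟩ := catK_rescale_absSum w hw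
  have e : ∀ w, sqSer w = C 1 + C (-(1/2) * w) * (X * rescale w catK) := by
    intro w
    have hc : rescale w (C (1/2 : ℂ)) = C (1/2 : ℂ) := by
      ext n
      rw [coeff_rescale, coeff_C]
      split_ifs with h <;> simp [h]
    rw [sqSer, map_sub, map_one, map_mul, map_mul, hc, rescale_X, map_mul, map_neg, map_one]
    ring
  refine ⟨1 + (-(1/2) * w) * (1 * v), ?_, ?_⟩
  · rw [e]
    exact (absSum_C _).add ((absSum_C _).mul (absSum_X.mul h1))
  · rw [e]
    have := (absSum_C 1).add ((absSum_C (-(1/2) * star w)).mul (absSum_X.mul h2))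
    convert this using 1
    simp

theorem exists_sqrt (a b : ℝ) (hab : a ^ 2 + b ^ 2 = 1) (hb : 0 < b) :
    ∃ S : PowerSeries ℂ, S * S = 1 - C (2 * (1 - 2 * (b : ℂ) ^ 2)) * X + X ^ 2 ∧
      constantCoeff S = 1 ∧ AbsSum S (2 * b) := by
  set w : ℂ := ⟨1 - 2 * b ^ 2, 2 * a * b⟩ with hwdef
  have hsum : w + star w = 2 * (1 - 2 * (b : ℂ) ^ 2) := by
    apply Complex.ext
    · simp [w, ← Complex.ofReal_pow]; ring
    · simp [w, ← Complex.ofReal_pow]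
  have hprod : w * star w = 1 := by
    apply Complex.ext
    · simp [w]
      have : a ^ 2 = 1 - b ^ 2 := by linarith
      linear_combination 4 * b ^ 2 * this
    · simp [w]; ring
  have hw : ‖w‖ = 1 := by
    have h := congrArg norm hprod
    rw [norm_mul, norm_star, norm_one] at h
    nlinarith [norm_nonneg w]
  obtain ⟨v, h1, h2⟩ := sqSer_absSum w hw
  have hv : v * v = 1 - w := by
    have h3 := (h1.mul h1).2
    rw [sqSer_sq] at h3
    have h4 := ((absSum_C 1).add ((absSum_C (-w)).mul absSum_X)).2
    have e : (C (1 : ℂ) + C (-w) * X : PowerSeries ℂ) = 1 - C w * X := by simp; ring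
    rw [e] at h4
    rw [h3.unique h4]; ring
  refine ⟨sqSer w * sqSer (star w), ?_, by simp [constantCoeff_sqSer], ?_⟩
  · have hC1 : (C w + C (star w) : PowerSeries ℂ) = C (2 * (1 - 2 * (b : ℂ) ^ 2)) := by
      rw [← map_add, hsum]
    have hC2 : (C w * C (star w) : PowerSeries ℂ) = 1 := by
      rw [← map_mul, hprod, map_one]
    calc _ = (sqSer w * sqSer w) * (sqSer (star w) * sqSer (star w)) := by ring
      _ = _ := by
        rw [sqSer_sq, sqSer_sq, ← hC1]
        linear_combination X ^ 2 * hC2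
  · have : v * star v = 2 * b := by
      have e1 : v * star v = ((‖v‖ ^ 2 : ℝ) : ℂ) := by
        have := Complex.mul_conj' v
        push_cast; exact this
      have e2 : (v * star v) * (v * star v) = ((2 * b) ^ 2 : ℝ) := by
        have hv' := congrArg star hv
        simp only [star_mul', star_sub, star_one] at hv'
        calc _ = (v * v) * (star v * star v) := by ring
          _ = 1 - (w + star w) + w * star w := by rw [hv, hv']; ring
          _ = _ := by rw [hsum, hprod]; push_cast; ring
      rw [e1] at e2 ⊢
      have e3 : ‖v‖ ^ 2 * ‖v‖ ^ 2 = (2 * b) ^ 2 := by exact_mod_cast e2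
      have e4 : ‖v‖ ^ 2 = 2 * b := by
        nlinarith [sq_nonneg ‖v‖, mul_pos hb hb]
      rw [e4]; push_cast; rfl
    rw [← this]
    exact h1.mul h2

theorem exists_series (a b : ℝ) (hab : a ^ 2 + b ^ 2 = 1) (ha : 0 < a) (hb : 0 < b) :
    ∃ L ρ : PowerSeries ℂ, ρ = X * (C (b : ℂ) * ρ + C (a : ℂ)) * (C (a : ℂ) * ρ - C (b : ℂ)) ∧
      L = 1 + X * (C (a : ℂ) * ρ - C (b : ℂ)) * L ∧
      Tendsto (fun n => coeff n L) atTop (𝓝 0) := by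
  obtain ⟨S, hS, hS0, hSs⟩ := exists_sqrt a b hab hb
  have hb1 : b < 1 := by nlinarith
  have hbC : (b : ℂ) ≠ 0 := by exact_mod_cast hb.ne'
  have haC : (a : ℂ) ≠ 0 := by exact_mod_cast ha.ne'
  have hb1C : (1 - (b : ℂ)) ≠ 0 := by
    have : 1 - b ≠ 0 := by linarith
    exact_mod_cast this
  have h2 : (2 : PowerSeries ℂ) = C 2 := (map_ofNat _ 2).symm
  set A : PowerSeries ℂ := C (a : ℂ) with hA
  set B : PowerSeries ℂ := C (b : ℂ) with hB
  have hAB : A ^ 2 + B ^ 2 = 1 := by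
    rw [hA, hB, ← map_pow, ← map_pow, ← map_add]
    have : (a : ℂ) ^ 2 + (b : ℂ) ^ 2 = 1 := by exact_mod_cast hab
    rw [this, map_one]
  have hA0 : A ≠ 0 := by simpa [hA] using haC
  have hB0 : B ≠ 0 := by simpa [hB] using hbC
  have hB1 : 1 - B ≠ 0 := by
    rw [hB, ← map_one C, ← map_sub]
    intro h
    exact hb1C (by simpa using congrArg constantCoeff h)
  have hS' : S * S = 1 - 2 * (1 - 2 * B ^ 2) * X + X ^ 2 := by
    rw [hS, h2, hB]; simp
  have hX0 : (X : PowerSeries ℂ) ≠ 0 := X_ne_zero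
  have h20 : (2 : PowerSeries ℂ) ≠ 0 := by
    rw [h2]; simp
  -- ρ
  obtain ⟨N, hN⟩ : (X : PowerSeries ℂ) ∣ 1 - X * (1 - 2 * B ^ 2) - S := by
    rw [X_dvd_iff]; simp [hS0]
  set ρ : PowerSeries ℂ := C (1 / (2 * a * b) : ℂ) * N with hρ
  have hρN : 2 * A * B * ρ = N := by
    rw [hρ, ← mul_assoc, h2, hA, hB, ← map_mul, ← map_mul, ← map_mul]
    have : (2 * (a : ℂ) * b) * (1 / (2 * a * b)) = 1 := by field_simp
    rw [this, map_one, one_mul]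
  have hSρ : S = 1 - X * (1 - 2 * B ^ 2) - X * (2 * A * B * ρ) := by
    rw [hρN, ← hN]; ring
  -- L
  set D : PowerSeries ℂ := S + C (1 - 2 * b : ℂ) + C (-1) * X with hD
  have hDs : AbsSum D 0 := by
    have := (hSs.add (absSum_C (1 - 2 * b : ℂ))).add ((absSum_C (-1)).mul absSum_X)
    convert this using 1
    ring
  have hD' : D = S + 1 - 2 * B - X := by
    rw [hD, hB, h2]; simp; ring
  set G : PowerSeries ℂ := mk 1 with hG
  have hG1 : G * (1 - X) = 1 := mk_one_mul_one_sub_eq_one ℂ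
  set L : PowerSeries ℂ := C (1 / (2 * (1 - b)) : ℂ) * (D * G) with hL
  have hLD : 2 * (1 - B) * (1 - X) * L = D := by
    have : 2 * (1 - B) * C (1 / (2 * (1 - b)) : ℂ) = 1 := by
      rw [h2, hB, ← map_one C, ← map_sub, ← map_mul, ← map_mul]
      congr 1; field_simp
    rw [hL]
    linear_combination D * (1 - X) * G * this + D * hG1
  have h1X : (1 - X : PowerSeries ℂ) ≠ 0 := by
    intro h; rw [h, mul_zero] at hG1; exact zero_ne_one hG1
  refine ⟨L, ρ, ?_, ?_, ?_⟩
  · have : 4 * A * B * X * (ρ - X * (B * ρ + A) * (A * ρ - B)) = 0 := by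
      rw [hSρ] at hS'
      linear_combination (-1) * hS' + (4 * X ^ 2 * B ^ 2 - 4 * A * B * X ^ 2 * ρ) * hAB
    have h4 : (4 * A * B * X : PowerSeries ℂ) ≠ 0 := by
      have : (4 : PowerSeries ℂ) = 2 * 2 := by norm_num
      rw [this]; simp [hA0, hB0, hX0, h20]
    exact sub_eq_zero.mp ((mul_eq_zero.mp this).resolve_left h4)
  · have hne : (2 * (1 - B) * (1 - X) * (2 * B) : PowerSeries ℂ) ≠ 0 := by
      simp only [ne_eq, mul_eq_zero, not_or]
      exact ⟨⟨⟨h20, hB1⟩, h1X⟩, h20, hB0⟩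
    apply mul_left_cancel₀ hne
    have hkey : (S + 2 * B - 1 + X) * D = 4 * B * (1 - B) * (1 - X) := by
      rw [hD']; linear_combination hS'
    have hk2 : 2 * B * (1 - X * (A * ρ - B)) = S + 2 * B - 1 + X := by
      rw [hSρ]; ring
    have : (2 * (1 - B) * (1 - X) * (2 * B)) * ((1 - X * (A * ρ - B)) * L)
        = 2 * (1 - B) * (1 - X) * (2 * B) := by
      calc _ = (2 * B * (1 - X * (A * ρ - B))) * (2 * (1 - B) * (1 - X) * L) := by ring
        _ = _ := by rw [hk2, hLD, hkey]; ring
    linear_combination this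
  · have hc : ∀ n, coeff n L = (1 / (2 * (1 - b)) : ℂ) * ∑ k ∈ Finset.range (n + 1), coeff k D := by
      intro n
      rw [hL, coeff_C_mul, coeff_mul, Finset.Nat.sum_antidiagonal_eq_sum_range_succ_mk]
      simp [hG]
    simp only [hc]
    have h := (hDs.2.tendsto_sum_nat.comp (tendsto_add_atTop_nat 1)).const_mul
      (1 / (2 * (1 - b)) : ℂ)
    simpa using h

theorem psi_lt (a b s : ℝ) (t : ℕ) : ∀ x, t < x → psi a b s t x = 0 := by
  induction t with
  | zero =>
    intro x hx
    have : x ≠ 0 := by omega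
    simp [psi, this]
  | succ t ih =>
    intro x hx
    have h1 : x ≠ 0 := by omega
    have h2 : x ≠ 1 := by omega
    simp [psi, h1, h2, ih (x + 1) (by omega), ih (x - 1) (by omega)]

theorem psi_odd (a b s : ℝ) (t : ℕ) : ∀ x, (t + x) % 2 = 1 → psi a b s t x = 0 := by
  induction t with
  | zero =>
    intro x hx
    have : x ≠ 0 := by omega
    simp [psi, this]
  | succ t ih =>
    intro x hx
    have h1 := ih (x + 1) (by omega)
    rcases Nat.eq_zero_or_pos x with rfl | hx0
    · simp [psi, h1]
    · have h2 := ih (x - 1) (by omega)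
      by_cases hx1 : x = 1
      · subst hx1
        simp at h2
        simp [psi, h1, h2]
      · simp [psi, h1, h2, hx1]

theorem psi_even (a b : ℝ) (L ρ : PowerSeries ℂ)
    (hρ : ρ = X * (C (b : ℂ) * ρ + C (a : ℂ)) * (C (a : ℂ) * ρ - C (b : ℂ)))
    (hL : L = 1 + X * (C (a : ℂ) * ρ - C (b : ℂ)) * L) (t : ℕ) :
    (∀ n, t = 2 * n → psi a b 1 t 0 = (coeff n L, 0)) ∧
    (∀ x n, t = x + 1 + 2 * n → psi a b 1 t (x + 1) =
      (coeff n (L * ρ * (C (b : ℂ) * ρ + C (a : ℂ)) ^ x),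
       coeff n (L * (C (b : ℂ) * ρ + C (a : ℂ)) ^ x))) := by
  set M := C (b : ℂ) * ρ + C (a : ℂ) with hM
  have hL0 : coeff 0 L = 1 := by
    rw [hL]; simp
  have hρ0 : constantCoeff ρ = 0 := by
    rw [hρ]; simp
  have hstepL : ∀ x n, coeff (n + 1) (L * ρ * M ^ x) =
      (a : ℂ) * coeff n (L * ρ * M ^ (x + 1)) - (b : ℂ) * coeff n (L * M ^ (x + 1)) := by
    intro x n
    have : L * ρ * M ^ x = X * (C (a : ℂ) * (L * ρ * M ^ (x + 1)) - C (b : ℂ) * (L * M ^ (x + 1))) := by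
      calc L * ρ * M ^ x = L * (X * M * (C (a : ℂ) * ρ - C (b : ℂ))) * M ^ x := by rw [← hρ]
        _ = _ := by ring
    rw [this, coeff_succ_X_mul, map_sub, coeff_C_mul, coeff_C_mul]
  have hstep0 : ∀ n, coeff (n + 1) L =
      (a : ℂ) * coeff n (L * ρ * M ^ 0) - (b : ℂ) * coeff n (L * M ^ 0) := by
    intro n
    have : L = 1 + X * (C (a : ℂ) * (L * ρ * M ^ 0) - C (b : ℂ) * (L * M ^ 0)) := by
      conv_lhs => rw [hL]
      ring
    conv_lhs => rw [this]
    rw [map_add, coeff_succ_X_mul, map_sub, coeff_C_mul, coeff_C_mul]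
    simp [coeff_one]
  have hstepR : ∀ x n, coeff n (L * M ^ (x + 1)) =
      (b : ℂ) * coeff n (L * ρ * M ^ x) + (a : ℂ) * coeff n (L * M ^ x) := by
    intro x n
    have : L * M ^ (x + 1) = C (b : ℂ) * (L * ρ * M ^ x) + C (a : ℂ) * (L * M ^ x) := by
      rw [pow_succ, hM]; ring
    rw [this, map_add, coeff_C_mul, coeff_C_mul]
  induction t with
  | zero =>
    refine ⟨fun n hn => ?_, fun x n h => by omega⟩
    obtain rfl : n = 0 := by omega
    rw [hL0]; simp [psi]
  | succ t ih =>
    refine ⟨fun n hn => ?_, fun x n h => ?_⟩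
    · obtain ⟨m, rfl⟩ : ∃ m, n = m + 1 := ⟨n - 1, by omega⟩
      have h1 := ih.2 0 m (by omega)
      simp only [zero_add] at h1
      rw [hstep0]
      simp only [psi, zero_add, h1, if_true]
    · have hfst : (psi a b 1 (t + 1) (x + 1)).1 = coeff n (L * ρ * M ^ x) := by
        simp only [psi]
        rcases n with _ | m
        · rw [psi_lt a b 1 t (x + 1 + 1) (by omega)]
          simp [hρ0]
        · rw [ih.2 (x + 1) m (by omega), hstepL]
      have hsnd : (psi a b 1 (t + 1) (x + 1)).2 = coeff n (L * M ^ x) := by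
        rcases x with _ | y
        · have := ih.1 n (by omega)
          simp [psi, this]
        · have := ih.2 y n (by omega)
          rw [hstepR]
          simp [psi, this]
      exact Prod.ext hfst hsnd

theorem psi_tendsto (a b : ℝ) (hab : a ^ 2 + b ^ 2 = 1) (ha : 0 < a) (hb : 0 < b) (x : ℕ) :
    Tendsto (fun n => (psi a b 1 (x + 2 * n) x).1) atTop (𝓝 0) ∧
    Tendsto (fun n => (psi a b 1 (x + 2 * n) x).2) atTop (𝓝 0) := by
  obtain ⟨L, ρ, hρ, hL, hlim⟩ := exists_series a b hab ha hb
  have haC : (a : ℂ) ≠ 0 := by exact_mod_cast ha.ne'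
  induction x with
  | zero =>
    have h : ∀ n, psi a b 1 (0 + 2 * n) 0 = (coeff n L, 0) := fun n =>
      (psi_even a b L ρ hρ hL _).1 n (by omega)
    simp only [h]
    exact ⟨hlim, tendsto_const_nhds⟩
  | succ x ih =>
    have hR : Tendsto (fun n => (psi a b 1 (x + 1 + 2 * n) (x + 1)).2) atTop (𝓝 0) := by
      rcases x with _ | y
      · have e : ∀ n, (psi a b 1 (0 + 1 + 2 * n) (0 + 1)).2 = (psi a b 1 (0 + 2 * n) 0).1 := by
          intro n
          rw [show 0 + 1 + 2 * n = (0 + 2 * n) + 1 by ring]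
          simp [psi]
        simp only [e]
        exact ih.1
      · have e : ∀ n, (psi a b 1 (y + 1 + 1 + 2 * n) (y + 1 + 1)).2 =
            b * (psi a b 1 (y + 1 + 2 * n) (y + 1)).1 + a * (psi a b 1 (y + 1 + 2 * n) (y + 1)).2 := by
          intro n
          rw [show y + 1 + 1 + 2 * n = (y + 1 + 2 * n) + 1 by ring]
          simp [psi]
        simp only [e]
        simpa using (ih.1.const_mul (b : ℂ)).add (ih.2.const_mul (a : ℂ))
    refine ⟨?_, hR⟩
    have e : ∀ n, (psi a b 1 (x + 1 + 2 * n) (x + 1)).1 =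
        (a : ℂ)⁻¹ * ((psi a b 1 (x + 2 * (n + 1)) x).1 + b * (psi a b 1 (x + 1 + 2 * n) (x + 1)).2) := by
      intro n
      rw [show x + 2 * (n + 1) = (x + 1 + 2 * n) + 1 by ring]
      have e2 : (psi a b 1 (x + 1 + 2 * n + 1) x).1 = a * (psi a b 1 (x + 1 + 2 * n) (x + 1)).1
          - b * (psi a b 1 (x + 1 + 2 * n) (x + 1)).2 := by
        simp only [psi]
      rw [e2]
      field_simp
      ring
    simp only [e]
    have h1 := ih.1.comp (tendsto_add_atTop_nat 1)
    simpa using (h1.add (hR.const_mul (b : ℂ))).const_mul ((a : ℂ)⁻¹)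

theorem prob_tendsto (a b : ℝ) (hab : a ^ 2 + b ^ 2 = 1) (ha : 0 < a) (hb : 0 < b) (x : ℕ) :
    Tendsto (fun t => prob a b 1 t x) atTop (𝓝 0) := by
  obtain ⟨h1, h2⟩ := psi_tendsto a b hab ha hb x
  have h : Tendsto (fun n => prob a b 1 (x + 2 * n) x) atTop (𝓝 0) := by
    simpa [prob] using (h1.norm.pow 2).add (h2.norm.pow 2)
  rw [Metric.tendsto_atTop] at h ⊢
  intro ε hε
  obtain ⟨N, hN⟩ := h ε hε
  refine ⟨x + 2 * N, fun t ht => ?_⟩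
  rcases Nat.mod_two_eq_zero_or_one (t + x) with hp | hp
  · obtain ⟨n, rfl⟩ : ∃ n, t = x + 2 * n := ⟨(t - x) / 2, by omega⟩
    exact hN n (by omega)
  · simpa [prob, psi_odd a b 1 t x hp] using hε

/-- In Case (A) (`s = +1`) there is no localization: for every `x ∈ ℤ₊`,
`lim_{t→∞} P(X_{2t} = x) = 0` and `lim_{t→∞} P(X_{2t+1} = x) = 0`. -/
theorem half_line_caseA_no_localization
    (κ : ℕ) (hκ : 3 ≤ κ) (a b : ℝ)
    (ha : a = 2 * Real.sqrt ((κ : ℝ) - 1) / κ) (hb : b = ((κ : ℝ) - 2) / κ)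
    (x : ℕ) :
    Tendsto (fun t : ℕ => prob a b 1 (2 * t) x) atTop (𝓝 0) ∧
    Tendsto (fun t : ℕ => prob a b 1 (2 * t + 1) x) atTop (𝓝 0) := by
  have hk : (3 : ℝ) ≤ κ := by exact_mod_cast hκ
  have hab : a ^ 2 + b ^ 2 = 1 := by
    rw [ha, hb, div_pow, div_pow, mul_pow, Real.sq_sqrt (by linarith)]
    field_simp
    ring
  have ha0 : 0 < a := by
    rw [ha]
    have : 0 < Real.sqrt ((κ : ℝ) - 1) := Real.sqrt_pos.mpr (by linarith)
    positivity
  have hb0 : 0 < b := by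
    rw [hb]
    exact div_pos (by linarith) (by linarith)
  have h := prob_tendsto a b hab ha0 hb0 x
  exact ⟨h.comp (tendsto_atTop_mono (fun n => by simp only [id]; omega) tendsto_id),
    h.comp (tendsto_atTop_mono (fun n => by simp only [id]; omega) tendsto_id)⟩

end
end

section
/- Weak convergence theorem, Case (A): with s = +1, X_t/t converges weakly to the distribution with density f_κ; that is, for every bounded continuous function g : ℝ → ℝ, lim_{t→∞} Σ_{x∈ℤ₊} P(X_t = x)·g(x/t) = ∫_0^a g(x)·f_κ(x) dx. -/
open Filter Topology MeasureTheory

noncomputable section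

section part1

/-- Fourier coefficient of a function on `[0, 2π]`. -/
def fc (u : ℝ → ℂ) (n : ℤ) : ℂ :=
  (1 / (2 * Real.pi)) • ∫ x in (0:ℝ)..(2 * Real.pi), Complex.exp (-(n * x * Complex.I)) * u x

instance fact_two_pi : Fact (0 < 2 * Real.pi) := ⟨Real.two_pi_pos⟩

lemma fourierCoeff_eq_fc (u : ℝ → ℂ) (hp : Function.Periodic u (2 * Real.pi)) (n : ℤ) :
    fourierCoeff (hp.lift) n = fc u n := by
  rw [fourierCoeff_eq_intervalIntegral _ _ 0, fc, zero_add]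
  congr 1
  apply intervalIntegral.integral_congr
  intro x _
  have hpi : (Real.pi : ℂ) ≠ 0 := by exact_mod_cast Real.pi_ne_zero
  simp only [Function.Periodic.lift_coe, smul_eq_mul]
  rw [fourier_coe_apply]
  congr 2
  push_cast
  field_simp

lemma parseval (u w : ℝ → ℂ) (hu : Continuous u) (hw : Continuous w)
    (hpu : Function.Periodic u (2 * Real.pi)) (hpw : Function.Periodic w (2 * Real.pi)) :
    HasSum (fun n : ℤ => starRingEnd ℂ (fc u n) * fc w n)
      ((1 / (2 * Real.pi)) • ∫ x in (0:ℝ)..(2 * Real.pi), starRingEnd ℂ (u x) * w x) := by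
  let U : C(AddCircle (2 * Real.pi), ℂ) := ⟨hpu.lift, continuous_quot_lift _ hu⟩
  let W : C(AddCircle (2 * Real.pi), ℂ) := ⟨hpw.lift, continuous_quot_lift _ hw⟩
  have h := (fourierBasis (T := 2 * Real.pi)).hasSum_inner_mul_inner
    (ContinuousMap.toLp 2 AddCircle.haarAddCircle ℂ U)
    (ContinuousMap.toLp 2 AddCircle.haarAddCircle ℂ W)
  have e1 : ∀ n, inner ℂ (fourierBasis (T := 2 * Real.pi) n)
      (ContinuousMap.toLp 2 AddCircle.haarAddCircle ℂ W) = fc w n := by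
    intro n
    rw [← HilbertBasis.repr_apply_apply, fourierBasis_repr, fourierCoeff_toLp]
    exact fourierCoeff_eq_fc w hpw n
  have e2 : ∀ n, inner ℂ (ContinuousMap.toLp 2 AddCircle.haarAddCircle ℂ U)
      (fourierBasis (T := 2 * Real.pi) n) = starRingEnd ℂ (fc u n) := by
    intro n
    rw [← inner_conj_symm, ← HilbertBasis.repr_apply_apply, fourierBasis_repr, fourierCoeff_toLp]
    congr 1
    exact fourierCoeff_eq_fc u hpu n
  simp only [e1, e2] at h
  suffices e3 : ((1 / (2 * Real.pi)) • ∫ x in (0:ℝ)..(2 * Real.pi), starRingEnd ℂ (u x) * w x)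
      = inner ℂ (ContinuousMap.toLp 2 AddCircle.haarAddCircle ℂ U)
        (ContinuousMap.toLp 2 AddCircle.haarAddCircle ℂ W) by
    rw [e3]; exact h
  rw [ContinuousMap.inner_toLp, AddCircle.integral_haarAddCircle,
    ← AddCircle.intervalIntegral_preimage (2 * Real.pi) 0, zero_add, one_div]
  congr 1
  apply intervalIntegral.integral_congr
  intro x _
  exact mul_comm _ _

lemma fc_shift (u : ℝ → ℂ) (hpu : Function.Periodic u (2 * Real.pi)) (s : ℝ) (n : ℤ) :
    fc (fun x => u (x + s)) n = Complex.exp (n * s * Complex.I) * fc u n := by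
  unfold fc
  have hper : Function.Periodic (fun x : ℝ => Complex.exp (-(n * x * Complex.I)) * u x)
      (2 * Real.pi) := by
    intro x
    simp only [hpu x]
    congr 1
    rw [Complex.exp_eq_exp_iff_exists_int]
    refine ⟨-n, ?_⟩
    push_cast
    ring
  have h1 := hper.intervalIntegral_add_eq s 0
  have h2 := intervalIntegral.integral_comp_add_right (a := 0) (b := 2 * Real.pi)
    (fun x : ℝ => Complex.exp (-(n * x * Complex.I)) * u x) s
  rw [zero_add] at h1
  rw [zero_add, add_comm (2 * Real.pi) s, h1] at h2
  rw [← h2, mul_smul_comm]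
  congr 1
  rw [← intervalIntegral.integral_const_mul]
  apply intervalIntegral.integral_congr
  intro x _
  simp only
  rw [← mul_assoc, ← Complex.exp_add]
  congr 2
  push_cast
  ring

lemma parseval_shift (u : ℝ → ℂ) (hu : Continuous u)
    (hpu : Function.Periodic u (2 * Real.pi)) (s : ℝ) :
    HasSum (fun n : ℤ => Complex.exp (n * s * Complex.I) * ((‖fc u n‖ ^ 2 : ℝ) : ℂ))
      ((1 / (2 * Real.pi)) • ∫ x in (0:ℝ)..(2 * Real.pi), starRingEnd ℂ (u x) * u (x + s)) := by
  have h := parseval u (fun x => u (x + s)) hu (by fun_prop) hpu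
    (fun x => by simpa [add_right_comm] using hpu (x + s))
  convert h using 2 with n
  rw [fc_shift u hpu, mul_left_comm, ← Complex.normSq_eq_conj_mul_self, Complex.normSq_eq_norm_sq]

end part1

section part2

lemma psiL_succ (a b s : ℝ) (t x : ℕ) : (psi a b s (t + 1) x).1 =
    (a : ℂ) * (psi a b s t (x + 1)).1 - (b : ℂ) * (psi a b s t (x + 1)).2 := by
  simp [psi]

lemma psiR_succ (a b s : ℝ) (t x : ℕ) : (psi a b s (t + 1) (x + 2)).2 =
    (b : ℂ) * (psi a b s t (x + 1)).1 + (a : ℂ) * (psi a b s t (x + 1)).2 := by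
  simp [psi]

lemma psiR_one (a b : ℝ) (t : ℕ) : (psi a b 1 (t + 1) 1).2 = (psi a b 1 t 0).1 := by
  simp [psi]

lemma psiR_zero (a b s : ℝ) (t : ℕ) : (psi a b s t 0).2 = 0 := by
  cases t <;> simp [psi]

lemma psi_zero_succ (a b s : ℝ) (x : ℕ) : psi a b s 0 (x + 1) = 0 := by
  simp [psi]

lemma psi_zero_zero (a b s : ℝ) : psi a b s 0 0 = (1, 0) := by
  simp [psi]

/-- Parity: `L_t(x)` vanishes for `t + x` odd, `R_t(x)` too. -/
lemma psi_parity (a b : ℝ) : ∀ t x : ℕ, (t + x) % 2 = 1 → psi a b 1 t x = 0 := by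
  intro t
  induction t with
  | zero =>
    intro x hx
    rcases x with _ | x
    · simp at hx
    · exact psi_zero_succ a b 1 x
  | succ t ih =>
    intro x hx
    apply Prod.ext
    · rw [psiL_succ, ih (x + 1) (by omega)]; simp
    · rcases x with _ | _ | x
      · simp [psiR_zero]
      · rw [zero_add, psiR_one, ih 0 (by omega)]; simp
      · rw [psiR_succ, ih (x + 1) (by omega)]; simp

/-- Finite propagation. -/
lemma psi_support (a b : ℝ) : ∀ t x : ℕ, t < x → psi a b 1 t x = 0 := by
  intro t
  induction t with
  | zero =>
    intro x hx
    rcases x with _ | x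
    · simp at hx
    · exact psi_zero_succ a b 1 x
  | succ t ih =>
    intro x hx
    apply Prod.ext
    · rw [psiL_succ, ih (x + 1) (by omega)]; simp
    · rcases x with _ | _ | x
      · simp [psiR_zero]
      · omega
      · rw [psiR_succ, ih (x + 1) (by omega)]; simp

/-- The folded amplitude. -/
def fold (a b : ℝ) (t n : ℕ) : ℂ := (psi a b 1 t n).1 + (psi a b 1 t (n + 1)).2

lemma fold_succ (a b : ℝ) (hab : a ^ 2 + b ^ 2 = 1) (t n : ℕ) :
    fold a b (t + 2) (n + 1) + fold a b t (n + 1)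
      = a * (fold a b (t + 1) (n + 2) + fold a b (t + 1) n) := by
  have h : (a : ℂ) ^ 2 + (b : ℂ) ^ 2 = 1 := by exact_mod_cast hab
  unfold fold
  rw [psiL_succ a b 1 (t + 1) (n + 1), psiR_succ a b 1 (t + 1) n,
    psiR_succ a b 1 t n, psiL_succ a b 1 t n, psiL_succ a b 1 t (n + 1), psiR_succ a b 1 t (n + 1)]
  linear_combination (-(psi a b 1 t (n + 1)).1 - (psi a b 1 t (n + 2)).2) * h

lemma fold_zero (a b : ℝ) (hab : a ^ 2 + b ^ 2 = 1) (t : ℕ) :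
    fold a b (t + 2) 0 + fold a b t 0
      = a * fold a b (t + 1) 1 + (1 - b) * fold a b (t + 1) 0 := by
  have h : (a : ℂ) ^ 2 + (b : ℂ) ^ 2 = 1 := by exact_mod_cast hab
  unfold fold
  rw [psiL_succ a b 1 (t + 1) 0, zero_add, psiR_one a b (t + 1), psiR_one a b t,
    psiR_succ a b 1 t 0, psiL_succ a b 1 t 0]
  ring_nf
  linear_combination (- (psi a b 1 t 1).2) * h

lemma fold_eq (a b c : ℝ) (hab : a ^ 2 + b ^ 2 = 1) (hc : a * c = 1 - b) (F : ℕ → ℤ → ℂ)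
    (h0 : ∀ n : ℕ, F 0 n = if n = 0 then 1 else 0)
    (h1 : ∀ n : ℕ, F 1 n = if n = 0 then 1 else 0)
    (h2 : ∀ t n, F (t + 2) n + F t n = a * (F (t + 1) (n + 1) + F (t + 1) (n - 1)))
    (h3 : ∀ t, F t (-1) = c * F t 0) :
    ∀ t n : ℕ, fold a b t n = F t n := by
  have hc' : (a : ℂ) * c = 1 - b := by exact_mod_cast hc
  have key : ∀ t : ℕ, (∀ n : ℕ, fold a b t n = F t n) ∧ (∀ n : ℕ, fold a b (t + 1) n = F (t + 1) n) := by
    intro t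
    induction t with
    | zero =>
      constructor
      · intro n
        rw [h0]
        rcases n with _ | n <;> simp [fold, psi_zero_succ, psi_zero_zero]
      · intro n
        rw [zero_add, h1]
        unfold fold
        have := psiL_succ a b 1 0 n
        rw [zero_add] at this
        rw [this]
        rcases n with _ | n
        · have := psiR_one a b 0
          simp only [zero_add] at this ⊢
          have h := psi_zero_succ a b 1 0
          rw [zero_add] at h
          simp [this, psi_zero_zero, h]
        · have := psiR_succ a b 1 0 n
          simp only [zero_add] at this
          simp [this, psi_zero_succ]
    | succ t ih =>
      refine ⟨ih.2, ?_⟩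
      intro n
      rcases n with _ | n
      · have e := fold_zero a b hab t
        have e2 := h2 t 0
        rw [ih.1, ih.2, ih.2] at e
        have e3 := h3 (t + 1)
        rw [show (0:ℤ) - 1 = -1 by ring, e3] at e2
        push_cast at e ⊢
        simp only [zero_add] at e2
        linear_combination e - e2 - F (t + 1) 0 * hc'
      · have e := fold_succ a b hab t n
        have e2 := h2 t (n + 1)
        rw [ih.1, ih.2, ih.2] at e
        push_cast at e ⊢
        rw [show (n : ℤ) + 1 + 1 = n + 2 by ring, show (n : ℤ) + 1 - 1 = n by ring] at e2
        linear_combination e - e2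
  exact fun t => (key t).1

lemma norm_fold (a b : ℝ) (t n : ℕ) :
    ‖fold a b t n‖ ^ 2 = ‖(psi a b 1 t n).1‖ ^ 2 + ‖(psi a b 1 t (n + 1)).2‖ ^ 2 := by
  unfold fold
  rcases Nat.mod_two_eq_zero_or_one (t + n) with h | h
  · rw [psi_parity a b t (n + 1) (by omega)]; simp
  · rw [psi_parity a b t n h]; simp

lemma coin_norm (a b : ℝ) (hab : a ^ 2 + b ^ 2 = 1) (z w : ℂ) :
    ‖(a : ℂ) * z - b * w‖ ^ 2 + ‖(b : ℂ) * z + a * w‖ ^ 2 = ‖z‖ ^ 2 + ‖w‖ ^ 2 := by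
  simp only [← Complex.normSq_eq_norm_sq, Complex.normSq_apply]
  simp
  linear_combination (z.re ^ 2 + z.im ^ 2 + w.re ^ 2 + w.im ^ 2) * hab

lemma hasSum_prob (a b : ℝ) (hab : a ^ 2 + b ^ 2 = 1) (t : ℕ) : HasSum (prob a b 1 t) 1 := by
  have hs : ∀ t, Summable (prob a b 1 t) := fun t =>
    summable_of_ne_finset_zero (s := Finset.range (t + 1)) (fun x hx => by
      have : t < x := by simpa [Nat.lt_succ_iff] using hx
      simp [prob, psi_support a b t x this])
  have hL : ∀ t, Summable (fun x => ‖(psi a b 1 t x).1‖ ^ 2) := fun t =>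
    summable_of_ne_finset_zero (s := Finset.range (t + 1)) (fun x hx => by
      have : t < x := by simpa [Nat.lt_succ_iff] using hx
      simp [psi_support a b t x this])
  have hR : ∀ t, Summable (fun x => ‖(psi a b 1 t x).2‖ ^ 2) := fun t =>
    summable_of_ne_finset_zero (s := Finset.range (t + 1)) (fun x hx => by
      have : t < x := by simpa [Nat.lt_succ_iff] using hx
      simp [psi_support a b t x this])
  suffices h : ∑' x, prob a b 1 t x = 1 from (hs t).hasSum_iff.2 h
  induction t with
  | zero =>
    rw [(hs 0).tsum_eq_zero_add]
    simp [prob, psi_zero_zero, psi_zero_succ]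
  | succ t ih =>
    refine Eq.trans ?_ ih
    have e1 : ∑' x, prob a b 1 (t + 1) x = ∑' x, ‖(psi a b 1 (t + 1) x).1‖ ^ 2
        + ∑' x, ‖(psi a b 1 (t + 1) x).2‖ ^ 2 := (hL (t + 1)).tsum_add (hR (t + 1))
    have hR2 := (summable_nat_add_iff 1).2 (hR (t + 1))
    have hR3 := (summable_nat_add_iff 2).2 (hR (t + 1))
    rw [e1, (hR (t + 1)).tsum_eq_zero_add, hR2.tsum_eq_zero_add, (hs t).tsum_eq_zero_add]
    have e2 : ∀ x, prob a b 1 t (x + 1) = ‖(psi a b 1 (t + 1) x).1‖ ^ 2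
        + ‖(psi a b 1 (t + 1) (x + 2)).2‖ ^ 2 := by
      intro x
      rw [psiL_succ, psiR_succ, coin_norm a b hab, prob]
    simp only [e2]
    rw [(hL (t + 1)).tsum_add hR3]
    simp only [zero_add, psiR_zero, psiR_one, prob]
    simp only [norm_zero]
    ring

end part2

section part3

/-- Dispersion relation. -/
def om (a x : ℝ) : ℝ := Real.arccos (a * Real.cos x)

/-- Group velocity. -/
def vv (a x : ℝ) : ℝ := a * Real.sin x / Real.sqrt (1 - (a * Real.cos x) ^ 2)

/-- Limit weight. -/
def Dd (a b x : ℝ) : ℝ := 2 * (1 + b) * Real.sin x ^ 2 / (1 - (a * Real.cos x) ^ 2)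

/-- Amplitude. -/
def Bf (a c x : ℝ) : ℂ :=
  (1 - Complex.exp (-(2 * x * Complex.I))) / (1 - c * Complex.exp (-(x * Complex.I)))
    / (Real.cos (om a x / 2) : ℂ)

/-- Fourier transform of the extended folded walk. -/
def uf (a c : ℝ) (t : ℕ) (x : ℝ) : ℂ := Bf a c x * (Real.cos (((t : ℝ) - 1 / 2) * om a x) : ℂ)

section basics
variable {a b c : ℝ}

lemma acos_lt (ha0 : 0 < a) (ha1 : a < 1) (x : ℝ) : a * Real.cos x < 1 := by
  nlinarith [Real.cos_le_one x]

lemma acos_gt (ha0 : 0 < a) (ha1 : a < 1) (x : ℝ) : -1 < a * Real.cos x := by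
  nlinarith [Real.neg_one_le_cos x]

lemma acos_sq (ha0 : 0 < a) (ha1 : a < 1) (x : ℝ) : 0 < 1 - (a * Real.cos x) ^ 2 := by
  nlinarith [acos_lt ha0 ha1 x, acos_gt ha0 ha1 x]

lemma cos_om (ha0 : 0 < a) (ha1 : a < 1) (x : ℝ) : Real.cos (om a x) = a * Real.cos x :=
  Real.cos_arccos (acos_gt ha0 ha1 x).le (acos_lt ha0 ha1 x).le

lemma cos_half_pos (ha0 : 0 < a) (ha1 : a < 1) (x : ℝ) : 0 < Real.cos (om a x / 2) := by
  have h1 : 0 ≤ om a x := Real.arccos_nonneg _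
  have h2 : om a x < Real.pi := by
    refine lt_of_le_of_ne (Real.arccos_le_pi _) ?_
    intro h
    rw [om, Real.arccos_eq_pi] at h
    linarith [acos_gt ha0 ha1 x]
  apply Real.cos_pos_of_mem_Ioo
  constructor <;> linarith [Real.pi_pos]

lemma cos_half_sq (ha0 : 0 < a) (ha1 : a < 1) (x : ℝ) :
    Real.cos (om a x / 2) ^ 2 = (1 + a * Real.cos x) / 2 := by
  rw [Real.cos_sq, mul_div_cancel₀ _ (two_ne_zero), cos_om ha0 ha1]
  ring

lemma om_add_pi (x : ℝ) : om a (x + Real.pi) = Real.pi - om a x := by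
  unfold om
  rw [Real.cos_add_pi, mul_neg, Real.arccos_neg]

lemma om_periodic : Function.Periodic (om a) (2 * Real.pi) := by
  intro x
  simp [om]

lemma om_neg (x : ℝ) : om a (-x) = om a x := by
  simp [om]

lemma om_continuous : Continuous (om a) := by
  unfold om
  fun_prop

lemma om_deriv (ha0 : 0 < a) (ha1 : a < 1) (x : ℝ) : HasDerivAt (om a) (vv a x) x := by
  have h := (Real.hasDerivAt_arccos (acos_gt ha0 ha1 x).ne' (acos_lt ha0 ha1 x).ne).comp x
    ((Real.hasDerivAt_cos x).const_mul a)
  refine HasDerivAt.congr_deriv h ?_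
  unfold vv
  ring

lemma vv_add_pi (x : ℝ) : vv a (x + Real.pi) = - vv a x := by
  simp [vv, neg_div]

lemma vv_continuous (ha0 : 0 < a) (ha1 : a < 1) : Continuous (vv a) := by
  unfold vv
  refine Continuous.div (by fun_prop) (by fun_prop) fun x => ?_
  exact (Real.sqrt_pos.2 (acos_sq ha0 ha1 x)).ne'

lemma Dd_add_pi (x : ℝ) : Dd a b (x + Real.pi) = Dd a b x := by
  simp [Dd]

lemma Dd_continuous (ha0 : 0 < a) (ha1 : a < 1) : Continuous (Dd a b) := by
  unfold Dd
  refine Continuous.div (by fun_prop) (by fun_prop) fun x => ?_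
  exact (acos_sq ha0 ha1 x).ne'

lemma Dd_nonneg (ha0 : 0 < a) (ha1 : a < 1) (hb0 : 0 < b) (x : ℝ) : 0 ≤ Dd a b x := by
  unfold Dd
  have := acos_sq ha0 ha1 x
  positivity

lemma den_ne (hc0 : 0 < c) (hc1 : c < 1) (x : ℝ) :
    (1 : ℂ) - c * Complex.exp (-(x * Complex.I)) ≠ 0 := by
  intro h
  have h2 : ‖(c : ℂ) * Complex.exp (-(x * Complex.I))‖ = 1 := by
    rw [← sub_eq_zero.1 h]; simp
  rw [norm_mul, ← neg_mul, ← Complex.ofReal_neg, Complex.norm_exp_ofReal_mul_I] at h2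
  simp [abs_of_pos hc0] at h2
  linarith

lemma Bf_continuous (ha0 : 0 < a) (ha1 : a < 1) (hc0 : 0 < c) (hc1 : c < 1) :
    Continuous (Bf a c) := by
  unfold Bf
  have := om_continuous (a := a)
  refine Continuous.div (Continuous.div (by fun_prop) (by fun_prop) (den_ne hc0 hc1))
    (by fun_prop) fun x => ?_
  exact_mod_cast (cos_half_pos ha0 ha1 x).ne'

lemma Bf_periodic : Function.Periodic (Bf a c) (2 * Real.pi) := by
  intro x
  unfold Bf
  have e1 : Complex.exp (-(2 * ((x + 2 * Real.pi : ℝ) : ℂ) * Complex.I))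
      = Complex.exp (-(2 * x * Complex.I)) := by
    rw [Complex.exp_eq_exp_iff_exists_int]
    exact ⟨-2, by push_cast; ring⟩
  have e2 : Complex.exp (-(((x + 2 * Real.pi : ℝ) : ℂ) * Complex.I))
      = Complex.exp (-(x * Complex.I)) := by
    rw [Complex.exp_eq_exp_iff_exists_int]
    exact ⟨-1, by push_cast; ring⟩
  rw [e1, e2, om_periodic x]

lemma uf_continuous (ha0 : 0 < a) (ha1 : a < 1) (hc0 : 0 < c) (hc1 : c < 1) (t : ℕ) :
    Continuous (uf a c t) := by
  unfold uf
  have := om_continuous (a := a)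
  have := Bf_continuous ha0 ha1 hc0 hc1
  fun_prop

lemma uf_periodic (t : ℕ) : Function.Periodic (uf a c t) (2 * Real.pi) := by
  intro x
  unfold uf
  rw [Bf_periodic x, om_periodic x]

lemma Bf_norm (ha0 : 0 < a) (ha1 : a < 1) (hb0 : 0 < b)
    (hab : a ^ 2 + b ^ 2 = 1) (hc : a * c = 1 - b) (hc0 : 0 < c) (hc1 : c < 1) (x : ℝ) :
    ‖Bf a c x‖ ^ 2 = 2 * Dd a b x := by
  have hcb : c * (1 + b) = a := by
    apply mul_left_cancel₀ ha0.ne'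
    linear_combination (1 + b) * hc - hab
  have e1 : ‖(1 : ℂ) - Complex.exp (-(2 * x * Complex.I))‖ ^ 2 = 4 * Real.sin x ^ 2 := by
    have : (-(2 * x * Complex.I) : ℂ) = ((-(2 * x) : ℝ) : ℂ) * Complex.I := by push_cast; ring
    rw [this, Complex.exp_mul_I, ← Complex.ofReal_cos, ← Complex.ofReal_sin,
      ← Complex.normSq_eq_norm_sq, Complex.normSq_apply]
    simp only [Complex.sub_re, Complex.one_re, Complex.add_re, Complex.ofReal_re, Complex.mul_re,
      Complex.I_re, Complex.ofReal_im, Complex.I_im, Complex.sub_im, Complex.one_im,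
      Complex.add_im, Complex.mul_im, Real.cos_neg, Real.sin_neg, Real.cos_two_mul,
      Real.sin_two_mul]
    have := Real.sin_sq_add_cos_sq x
    have h3 : Real.cos x ^ 2 = 1 - Real.sin x ^ 2 := by linarith
    ring_nf
    rw [show Real.cos x ^ 4 = (Real.cos x ^ 2) ^ 2 by ring, h3]
    ring
  have e2 : ‖(1 : ℂ) - c * Complex.exp (-(x * Complex.I))‖ ^ 2
      = 1 + c ^ 2 - 2 * c * Real.cos x := by
    have : (-(x * Complex.I) : ℂ) = ((-x : ℝ) : ℂ) * Complex.I := by push_cast; ring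
    rw [this, Complex.exp_mul_I, ← Complex.ofReal_cos, ← Complex.ofReal_sin,
      ← Complex.normSq_eq_norm_sq, Complex.normSq_apply]
    simp only [Complex.sub_re, Complex.one_re, Complex.add_re, Complex.ofReal_re, Complex.mul_re,
      Complex.I_re, Complex.ofReal_im, Complex.I_im, Complex.sub_im, Complex.one_im,
      Complex.add_im, Complex.mul_im, Real.cos_neg, Real.sin_neg]
    linear_combination c ^ 2 * Real.sin_sq_add_cos_sq x
  have e3 : (1 + c ^ 2 - 2 * c * Real.cos x) * (1 + b) = 2 * (1 - a * Real.cos x) := by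
    have : c ^ 2 * (1 + b) = 1 - b := by rw [← hc, ← hcb]; ring
    linear_combination this - 2 * Real.cos x * hcb
  have h1 := acos_lt ha0 ha1 x
  have h2 := acos_gt ha0 ha1 x
  have h4 : 1 + c ^ 2 - 2 * c * Real.cos x = 2 * (1 - a * Real.cos x) / (1 + b) := by
    rw [← e3]; field_simp
  unfold Bf Dd
  rw [norm_div, norm_div, div_pow, div_pow, e1, e2, Complex.norm_real, Real.norm_eq_abs, sq_abs,
    cos_half_sq ha0 ha1, h4]
  have : 1 - (a * Real.cos x) ^ 2 = (1 - a * Real.cos x) * (1 + a * Real.cos x) := by ring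
  rw [this]
  have h5 : 1 - a * Real.cos x ≠ 0 := by linarith
  have h6 : 1 + a * Real.cos x ≠ 0 := by linarith
  field_simp
  ring

lemma Bf_bdd (ha0 : 0 < a) (ha1 : a < 1) (hc0 : 0 < c) (hc1 : c < 1) :
    ∃ M, 0 ≤ M ∧ ∀ x, ‖Bf a c x‖ ≤ M := by
  have h := (Bf_periodic (a := a) (c := c)).isBounded_of_continuous (by positivity)
    (Bf_continuous ha0 ha1 hc0 hc1)
  obtain ⟨M, hM⟩ := h.exists_norm_le
  exact ⟨M, (norm_nonneg _).trans (hM _ ⟨0, rfl⟩), fun x => hM _ ⟨x, rfl⟩⟩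

end basics

section fcs

lemma fc_integrable {u : ℝ → ℂ} (hu : Continuous u) (n : ℤ) (p q : ℝ) :
    IntervalIntegrable (fun x : ℝ => Complex.exp (-(n * x * Complex.I)) * u x) volume p q := by
  apply Continuous.intervalIntegrable
  fun_prop

lemma fc_add {u w : ℝ → ℂ} (hu : Continuous u) (hw : Continuous w) (n : ℤ) :
    fc (fun x => u x + w x) n = fc u n + fc w n := by
  unfold fc
  rw [← smul_add, ← intervalIntegral.integral_add (fc_integrable hu n _ _)
    (fc_integrable hw n _ _)]
  simp only [mul_add]

lemma fc_mul (u : ℝ → ℂ) (n : ℤ) (k : ℂ) :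
    fc (fun x => k * u x) n = k * fc u n := by
  unfold fc
  rw [mul_smul_comm, ← intervalIntegral.integral_const_mul]
  congr 2
  ext x
  ring

lemma fc_exp (u : ℝ → ℂ) (n m : ℤ) :
    fc (fun x => Complex.exp (-(m * x * Complex.I)) * u x) n = fc u (n + m) := by
  unfold fc
  congr 2
  ext x
  rw [← mul_assoc, ← Complex.exp_add]
  congr 2
  push_cast
  ring

lemma fc_one (n : ℤ) : fc (fun _ => 1) n = if n = 0 then 1 else 0 := by
  have h := fourierCoeff_eq_fc (fun _ => 1) (fun _ => rfl) n
  rw [← h]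
  have e : (Function.Periodic.lift (f := fun _ : ℝ => (1 : ℂ)) (c := 2 * Real.pi) (fun _ => rfl))
      = (fourier 0 : C(AddCircle (2 * Real.pi), ℂ)) := by
    ext x
    induction x using QuotientAddGroup.induction_on with
    | H x => rw [fourier_zero]; exact Function.Periodic.lift_coe (f := fun _ : ℝ => (1 : ℂ)) (fun _ => rfl) x
  rw [e, fourierCoeff_fourier]
  simp [Pi.single_apply]

lemma fc_bdd {u : ℝ → ℂ} {M : ℝ} (hM : ∀ x, ‖u x‖ ≤ M) (n : ℤ) : ‖fc u n‖ ≤ M := by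
  unfold fc
  have h := intervalIntegral.norm_integral_le_of_norm_le_const (a := 0) (b := 2 * Real.pi)
    (f := fun x : ℝ => Complex.exp (-(n * x * Complex.I)) * u x) (C := M) (fun x _ => by
      have : (-(n * x * Complex.I) : ℂ) = ((-(n * x) : ℝ) : ℂ) * Complex.I := by push_cast; ring
      rw [norm_mul, this, Complex.norm_exp_ofReal_mul_I, one_mul]
      exact hM x)
  have hp := Real.two_pi_pos
  rw [sub_zero, abs_of_pos hp] at h
  rw [norm_smul, Real.norm_eq_abs, abs_of_pos (by positivity), one_div, inv_mul_le_iff₀ hp]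
  linarith

end fcs

section recs
variable {a b c : ℝ}

lemma F_rec (ha0 : 0 < a) (ha1 : a < 1) (hc0 : 0 < c) (hc1 : c < 1) (t : ℕ) (n : ℤ) :
    fc (uf a c (t + 2)) n + fc (uf a c t) n
      = a * (fc (uf a c (t + 1)) (n + 1) + fc (uf a c (t + 1)) (n - 1)) := by
  have hc := uf_continuous ha0 ha1 hc0 hc1
  have h1 := hc (t + 1)
  rw [← fc_add (hc _) (hc _), sub_eq_add_neg n 1, ← fc_exp _ n 1, ← fc_exp _ n (-1), ← fc_add
    (by fun_prop) (by fun_prop), ← fc_mul]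
  congr 1
  ext x
  have e1 : Real.cos ((((t + 2 : ℕ) : ℝ) - 1 / 2) * om a x)
      + Real.cos (((t : ℝ) - 1 / 2) * om a x)
      = 2 * (a * Real.cos x) * Real.cos ((((t + 1 : ℕ) : ℝ) - 1 / 2) * om a x) := by
    rw [← cos_om ha0 ha1 x, mul_assoc, ← mul_assoc, Real.two_mul_cos_mul_cos, add_comm]
    congr 1
    · rw [← Real.cos_neg]; congr 1; push_cast; ring
    · congr 1; push_cast; ring
  have e2 : Complex.exp (-(((1 : ℤ) : ℂ) * x * Complex.I))
      + Complex.exp (-(((-1 : ℤ) : ℂ) * x * Complex.I)) = 2 * Complex.cos x := by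
    rw [Complex.two_cos]; push_cast; ring_nf
  unfold uf
  have e1' := congrArg (fun r : ℝ => (r : ℂ)) e1
  simp only [Complex.ofReal_add, Complex.ofReal_mul, Complex.ofReal_ofNat] at e1'
  rw [← add_mul, e2]
  simp only [Complex.ofReal_mul, Complex.ofReal_cos] at e1' ⊢
  linear_combination Bf a c x * e1'

lemma uf_mul (ha0 : 0 < a) (ha1 : a < 1) (hc0 : 0 < c) (hc1 : c < 1) (t : ℕ) (x : ℝ) :
    (1 - c * Complex.exp (-(x * Complex.I))) * uf a c t x
      = (1 - Complex.exp (-(2 * x * Complex.I))) *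
        ((Real.cos (((t : ℝ) - 1 / 2) * om a x) / Real.cos (om a x / 2) : ℝ) : ℂ) := by
  have h1 := den_ne hc0 hc1 x
  have h2 : (Real.cos (om a x / 2) : ℂ) ≠ 0 := by exact_mod_cast (cos_half_pos ha0 ha1 x).ne'
  unfold uf Bf
  rw [Complex.ofReal_div]
  field_simp

lemma F_bdry (ha0 : 0 < a) (ha1 : a < 1) (hc0 : 0 < c) (hc1 : c < 1) (t : ℕ) :
    fc (uf a c t) (-1) = c * fc (uf a c t) 0 := by
  have hu := uf_continuous ha0 ha1 hc0 hc1 t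
  have e : fc (uf a c t) (-1) + fc (fun x => (-c : ℂ) * uf a c t x) 0 = 0 := by
    have h := fc_exp (uf a c t) 0 (-1)
    rw [zero_add] at h
    rw [← h, ← fc_add (by fun_prop) (by fun_prop)]
    unfold fc
    set φ : ℝ → ℝ := fun x => Real.cos (((t : ℝ) - 1 / 2) * om a x) / Real.cos (om a x / 2) with hφ
    have h1 : ∀ x : ℝ, Complex.exp (-(((0 : ℤ) : ℂ) * x * Complex.I)) *
        (Complex.exp (-(((-1 : ℤ) : ℂ) * x * Complex.I)) * uf a c t x + -c * uf a c t x)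
        = ((2 * Real.sin x * φ x : ℝ) : ℂ) * Complex.I := by
      intro x
      have h2 := uf_mul ha0 ha1 hc0 hc1 t x
      have h3 : Complex.exp (-(((-1 : ℤ) : ℂ) * x * Complex.I)) = Complex.exp (x * Complex.I) := by
        congr 1; push_cast; ring
      have h4 : Complex.exp (x * Complex.I) * Complex.exp (-(x * Complex.I)) = 1 := by
        rw [← Complex.exp_add]; simp
      have h5 : Complex.exp (x * Complex.I) * Complex.exp (-(2 * x * Complex.I))
          = Complex.exp (-(x * Complex.I)) := by
        rw [← Complex.exp_add]; congr 1; ring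
      have h6 := Complex.two_sin (x : ℂ)
      have h7 : Complex.exp (x * Complex.I) - Complex.exp (-(x * Complex.I))
          = 2 * Complex.sin x * Complex.I := by
        rw [h6, neg_mul]
        linear_combination (Complex.exp (x * Complex.I)
          - Complex.exp (-(x * Complex.I))) * Complex.I_mul_I
      rw [h3]
      simp only [Int.cast_zero, zero_mul, neg_zero, Complex.exp_zero, one_mul]
      change _ = _ * ((φ x : ℝ) : ℂ) at h2
      push_cast
      linear_combination Complex.exp (x * Complex.I) * h2 + c * uf a c t x * h4
        - h5 * (φ x : ℂ) + h7 * (φ x : ℂ)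
    simp only [h1]
    have h8 := intervalIntegral.integral_comp_sub_left (a := 0) (b := 2 * Real.pi)
      (fun x : ℝ => ((2 * Real.sin x * φ x : ℝ) : ℂ) * Complex.I) (2 * Real.pi)
    rw [sub_self, sub_zero] at h8
    have h9 : ∀ x, ((2 * Real.sin (2 * Real.pi - x) * φ (2 * Real.pi - x) : ℝ) : ℂ) * Complex.I
        = - (((2 * Real.sin x * φ x : ℝ) : ℂ) * Complex.I) := by
      intro x
      have : φ (2 * Real.pi - x) = φ x := by
        simp only [hφ]
        rw [show 2 * Real.pi - x = -x + 2 * Real.pi by ring, om_periodic, om_neg]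
      rw [this, Real.sin_two_pi_sub]
      push_cast; ring
    simp only [h9] at h8
    rw [intervalIntegral.integral_neg] at h8
    have h10 : (∫ x in (0:ℝ)..(2 * Real.pi), ((2 * Real.sin x * φ x : ℝ) : ℂ) * Complex.I) = 0 := by
      linear_combination (-1/2 : ℂ) * h8
    rw [h10, smul_zero]
  rw [fc_mul] at e
  linear_combination e

lemma F_one : uf a c 1 = uf a c 0 := by
  ext x
  unfold uf
  congr 2
  rw [← Real.cos_neg]
  congr 1
  push_cast
  ring

lemma F_zero_rec (ha0 : 0 < a) (ha1 : a < 1) (hc0 : 0 < c) (hc1 : c < 1) (n : ℤ) :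
    fc (uf a c 0) n = c * fc (uf a c 0) (n + 1) + (if n = 0 then 1 else 0)
      - (if n = -2 then 1 else 0) := by
  have hu := uf_continuous ha0 ha1 hc0 hc1 0
  have e : fc (uf a c 0) n + -c * fc (uf a c 0) (n + 1)
      = fc (fun _ => 1) n + -1 * fc (fun _ => 1) (n + 2) := by
    rw [← fc_exp (uf a c 0) n 1, ← fc_exp _ n 2, ← fc_mul, ← fc_mul, ← fc_add hu (by fun_prop),
      ← fc_add (by fun_prop) (by fun_prop)]
    congr 1
    ext x
    have h := uf_mul ha0 ha1 hc0 hc1 0 x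
    have h1 : Real.cos ((((0 : ℕ) : ℝ) - 1 / 2) * om a x) / Real.cos (om a x / 2) = 1 := by
      rw [div_eq_one_iff_eq (cos_half_pos ha0 ha1 x).ne', ← Real.cos_neg]
      congr 1
      push_cast; ring
    rw [h1] at h
    simp only [Int.cast_one, one_mul, Int.cast_ofNat, mul_one]
    push_cast at h
    linear_combination h
  rw [fc_one, fc_one] at e
  have : (n + 2 = 0) = (n = -2) := by
    apply propext; constructor <;> intro h <;> omega
  simp only [this] at e
  linear_combination e

lemma F_zero_pos (ha0 : 0 < a) (ha1 : a < 1) (hc0 : 0 < c) (hc1 : c < 1) (n : ℤ) (hn : 0 < n) :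
    fc (uf a c 0) n = 0 := by
  obtain ⟨M, hM0, hM⟩ := Bf_bdd ha0 ha1 hc0 hc1
  have hM' : ∀ x, ‖uf a c 0 x‖ ≤ M := by
    intro x
    unfold uf
    rw [norm_mul, Complex.norm_real, Real.norm_eq_abs]
    calc _ ≤ M * 1 := mul_le_mul (hM x) (Real.abs_cos_le_one _) (abs_nonneg _) hM0
      _ = M := mul_one M
  have h : ∀ k : ℕ, fc (uf a c 0) n = c ^ k * fc (uf a c 0) (n + k) := by
    intro k
    induction k with
    | zero => simp
    | succ k ih =>
      rw [ih, F_zero_rec ha0 ha1 hc0 hc1 (n + k), if_neg (by omega), if_neg (by omega)]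
      push_cast
      ring_nf
  have h2 : ∀ k : ℕ, ‖fc (uf a c 0) n‖ ≤ c ^ k * M := by
    intro k
    rw [h k, norm_mul, norm_pow, Complex.norm_real, Real.norm_eq_abs, abs_of_pos hc0]
    gcongr
    exact fc_bdd hM' _
  have h3 : Tendsto (fun k : ℕ => c ^ k * M) atTop (𝓝 (0 * M)) :=
    (tendsto_pow_atTop_nhds_zero_of_lt_one hc0.le hc1).mul_const M
  rw [zero_mul] at h3
  have := ge_of_tendsto' h3 h2
  exact norm_le_zero_iff.1 this

lemma F_zero_nat (ha0 : 0 < a) (ha1 : a < 1) (hc0 : 0 < c) (hc1 : c < 1) (n : ℕ) :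
    fc (uf a c 0) n = if n = 0 then 1 else 0 := by
  rcases n with _ | n
  · have h := F_zero_rec ha0 ha1 hc0 hc1 0
    rw [F_zero_pos ha0 ha1 hc0 hc1 (0 + 1) (by omega)] at h
    simpa using h
  · rw [F_zero_pos ha0 ha1 hc0 hc1 _ (by omega)]
    simp

lemma F_zero_neg (ha0 : 0 < a) (ha1 : a < 1) (hc0 : 0 < c) (hc1 : c < 1) (n : ℕ) :
    fc (uf a c 0) (-(n + 2 : ℕ) : ℤ) = c ^ n * (c ^ 2 - 1) := by
  induction n with
  | zero =>
    have h0 := F_zero_nat ha0 ha1 hc0 hc1 0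
    have h1 := F_bdry ha0 ha1 hc0 hc1 0
    have h2 := F_zero_rec ha0 ha1 hc0 hc1 (-2)
    simp at h0 h1 h2 ⊢
    rw [h2, h1, h0]
    ring
  | succ n ih =>
    rw [F_zero_rec ha0 ha1 hc0 hc1, if_neg (by omega), if_neg (by omega)]
    have : (-((n + 1 + 2 : ℕ) : ℤ)) + 1 = -(n + 2 : ℕ) := by push_cast; ring
    rw [this, ih]
    ring

lemma mass_zero (ha0 : 0 < a) (ha1 : a < 1) (hc0 : 0 < c) (hc1 : c < 1) :
    HasSum (fun n : ℤ => ‖fc (uf a c 0) n‖ ^ 2) 2 := by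
  have hg : HasSum (fun n : ℕ => ‖fc (uf a c 0) (-((n + 1 : ℕ) : ℤ))‖ ^ 2) 1 := by
    rw [← hasSum_nat_add_iff' 1]
    have h := (hasSum_geometric_of_lt_one (r := c ^ 2) (by positivity) (by nlinarith)).mul_left
      ((1 - c ^ 2) ^ 2)
    have e1 : (fun n : ℕ => ‖fc (uf a c 0) (-((n + 1 + 1 : ℕ) : ℤ))‖ ^ 2)
        = fun n : ℕ => (1 - c ^ 2) ^ 2 * (c ^ 2) ^ n := by
      ext n
      have := F_zero_neg ha0 ha1 hc0 hc1 n
      rw [show n + 1 + 1 = n + 2 by ring, this, norm_mul, norm_pow, Complex.norm_real,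
        Real.norm_eq_abs, abs_of_pos hc0]
      have : ((c : ℂ) ^ 2 - 1) = ((c ^ 2 - 1 : ℝ) : ℂ) := by push_cast; ring
      rw [this, Complex.norm_real, Real.norm_eq_abs, mul_pow, sq_abs]
      ring
    have e2 : 1 - ∑ i ∈ Finset.range 1, ‖fc (uf a c 0) (-((i + 1 : ℕ) : ℤ))‖ ^ 2
        = (1 - c ^ 2) ^ 2 * (1 - c ^ 2)⁻¹ := by
      have h0 := F_zero_nat ha0 ha1 hc0 hc1 0
      have h1 := F_bdry ha0 ha1 hc0 hc1 0
      simp at h0 h1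
      simp [h1, h0]
      have : 1 - c ^ 2 ≠ 0 := by nlinarith
      field_simp
    rw [e1, e2]
    exact h
  have hp : HasSum (fun n : ℕ => ‖fc (uf a c 0) n‖ ^ 2) 1 := by
    have : (fun n : ℕ => ‖fc (uf a c 0) n‖ ^ 2) = fun n => if n = 0 then 1 else 0 := by
      ext n
      rw [F_zero_nat ha0 ha1 hc0 hc1 n]
      split_ifs <;> simp
    rw [this]
    exact hasSum_ite_eq 0 1
  have := HasSum.of_nat_of_neg_add_one (f := fun n : ℤ => ‖fc (uf a c 0) n‖ ^ 2) hp
    (by simpa using hg)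
  norm_num at this
  exact this

lemma fold_eq_fc (ha0 : 0 < a) (ha1 : a < 1) (hab : a ^ 2 + b ^ 2 = 1) (hc : a * c = 1 - b)
    (hc0 : 0 < c) (hc1 : c < 1) (t n : ℕ) : fold a b t n = fc (uf a c t) n := by
  refine fold_eq a b c hab hc (fun t => fc (uf a c t)) (F_zero_nat ha0 ha1 hc0 hc1) ?_
    (F_rec ha0 ha1 hc0 hc1) (F_bdry ha0 ha1 hc0 hc1) t n
  intro n
  simp only [F_one]
  exact F_zero_nat ha0 ha1 hc0 hc1 n

end recs

end part3

section part4

section asym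
variable {a b c : ℝ}

/-- Product of shifted amplitudes. -/
def Es (a c s x : ℝ) : ℂ := starRingEnd ℂ (Bf a c x) * Bf a c (x + s) / 2

lemma Es_continuous (ha0 : 0 < a) (ha1 : a < 1) (hc0 : 0 < c) (hc1 : c < 1) (s : ℝ) :
    Continuous (Es a c s) := by
  have := Bf_continuous ha0 ha1 hc0 hc1
  unfold Es
  have h2 : Continuous fun x => starRingEnd ℂ (Bf a c x) := Complex.continuous_conj.comp this
  fun_prop

lemma Es_periodic (s : ℝ) : Function.Periodic (Es a c s) (2 * Real.pi) := by
  intro x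
  unfold Es
  rw [Bf_periodic x, add_right_comm, Bf_periodic (x + s)]

lemma Es_zero (ha0 : 0 < a) (ha1 : a < 1) (hb0 : 0 < b)
    (hab : a ^ 2 + b ^ 2 = 1) (hc : a * c = 1 - b) (hc0 : 0 < c) (hc1 : c < 1) (x : ℝ) :
    Es a c 0 x = (Dd a b x : ℂ) := by
  unfold Es
  rw [add_zero, ← Complex.normSq_eq_conj_mul_self, Complex.normSq_eq_norm_sq,
    Bf_norm ha0 ha1 hb0 hab hc hc0 hc1]
  push_cast
  ring

lemma uf_prod (t : ℕ) (s x : ℝ) :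
    starRingEnd ℂ (uf a c t x) * uf a c t (x + s)
      = Es a c s x * (Real.cos (((t : ℝ) - 1 / 2) * (om a (x + s) - om a x)) : ℂ)
      + Es a c s x * (Real.cos (((t : ℝ) - 1 / 2) * (om a (x + s) + om a x)) : ℂ) := by
  unfold uf Es
  rw [map_mul, Complex.conj_ofReal]
  have h : 2 * Real.cos (((t : ℝ) - 1 / 2) * om a (x + s)) * Real.cos (((t : ℝ) - 1 / 2) * om a x)
      = Real.cos (((t : ℝ) - 1 / 2) * (om a (x + s) - om a x))
      + Real.cos (((t : ℝ) - 1 / 2) * (om a (x + s) + om a x)) := by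
    rw [Real.two_mul_cos_mul_cos]
    congr 2 <;> ring
  have h' := congrArg (fun r : ℝ => (r : ℂ)) h
  simp only [Complex.ofReal_add, Complex.ofReal_mul, Complex.ofReal_ofNat] at h'
  linear_combination (starRingEnd ℂ (Bf a c x) * Bf a c (x + s) / 2) * h'

lemma int_split (ha0 : 0 < a) (ha1 : a < 1) (hc0 : 0 < c) (hc1 : c < 1) (t : ℕ) (s : ℝ) :
    ∫ x in (0:ℝ)..(2 * Real.pi), starRingEnd ℂ (uf a c t x) * uf a c t (x + s)
      = (∫ x in (0:ℝ)..(2 * Real.pi),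
          Es a c s x * (Real.cos (((t : ℝ) - 1 / 2) * (om a (x + s) - om a x)) : ℂ))
      + (1 / 2) * (∫ x in (0:ℝ)..(2 * Real.pi), (Es a c s x - Es a c s (x + Real.pi)) *
          (Real.cos (((t : ℝ) - 1 / 2) * (om a (x + s) + om a x)) : ℂ)) := by
  have hE := Es_continuous ha0 ha1 hc0 hc1 s
  have ho := om_continuous (a := a)
  simp only [uf_prod]
  rw [intervalIntegral.integral_add (Continuous.intervalIntegrable (by fun_prop) _ _)
    (Continuous.intervalIntegrable (by fun_prop) _ _)]
  congr 1
  set h : ℝ → ℂ := fun x =>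
    Es a c s x * (Real.cos (((t : ℝ) - 1 / 2) * (om a (x + s) + om a x)) : ℂ) with hh
  have hper : Function.Periodic h (2 * Real.pi) := by
    intro x
    simp only [hh]
    rw [Es_periodic s x, om_periodic x, add_right_comm, om_periodic (x + s)]
  have hcont : Continuous h := by simp only [hh]; fun_prop
  have h1 := hper.intervalIntegral_add_eq Real.pi 0
  have h2 := intervalIntegral.integral_comp_add_right (a := 0) (b := 2 * Real.pi) h Real.pi
  rw [zero_add] at h1
  rw [zero_add, add_comm (2 * Real.pi) Real.pi, h1] at h2
  have h3 : ∀ x, (Es a c s x - Es a c s (x + Real.pi)) *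
      (Real.cos (((t : ℝ) - 1 / 2) * (om a (x + s) + om a x)) : ℂ) = h x + h (x + Real.pi) := by
    intro x
    simp only [hh]
    rw [add_right_comm x Real.pi s, om_add_pi, om_add_pi]
    have : Real.cos (((t : ℝ) - 1 / 2) * (Real.pi - om a (x + s) + (Real.pi - om a x)))
        = - Real.cos (((t : ℝ) - 1 / 2) * (om a (x + s) + om a x)) := by
      have e : ((t : ℝ) - 1 / 2) * (Real.pi - om a (x + s) + (Real.pi - om a x))
        = -(((t : ℝ) - 1 / 2) * (om a (x + s) + om a x) + Real.pi) + t * (2 * Real.pi) := by ring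
      rw [e, Real.cos_add_nat_mul_two_pi, Real.cos_neg, Real.cos_add_pi]
    rw [this]
    push_cast
    ring
  simp only [h3]
  rw [intervalIntegral.integral_add (Continuous.intervalIntegrable (by fun_prop) _ _)
    (Continuous.intervalIntegrable (by fun_prop) _ _), h2]
  ring

lemma mass_eq (ha0 : 0 < a) (ha1 : a < 1) (hb0 : 0 < b)
    (hab : a ^ 2 + b ^ 2 = 1) (hc : a * c = 1 - b) (hc0 : 0 < c) (hc1 : c < 1) (t : ℕ) :
    HasSum (fun n : ℤ => ((‖fc (uf a c t) n‖ ^ 2 : ℝ) : ℂ))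
      ((1 / (2 * Real.pi)) • ∫ x in (0:ℝ)..(2 * Real.pi), (Dd a b x : ℂ)) := by
  have h := parseval_shift (uf a c t) (uf_continuous ha0 ha1 hc0 hc1 t) (uf_periodic t) 0
  rw [int_split ha0 ha1 hc0 hc1 t 0] at h
  simp only [Es_zero ha0 ha1 hb0 hab hc hc0 hc1, Dd_add_pi, sub_self, zero_mul, add_zero,
    mul_zero, Real.cos_zero, Complex.ofReal_zero, Complex.exp_zero, one_mul, Complex.ofReal_one,
    mul_one, intervalIntegral.integral_zero] at h
  exact h

lemma mass_two (ha0 : 0 < a) (ha1 : a < 1) (hb0 : 0 < b)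
    (hab : a ^ 2 + b ^ 2 = 1) (hc : a * c = 1 - b) (hc0 : 0 < c) (hc1 : c < 1) :
    ∫ x in (0:ℝ)..(2 * Real.pi), Dd a b x = 4 * Real.pi := by
  have h1 := mass_eq ha0 ha1 hb0 hab hc hc0 hc1 0
  have h2 := (Complex.hasSum_ofReal).2 (mass_zero ha0 ha1 hc0 hc1)
  have h3 := h1.unique h2
  rw [intervalIntegral.integral_ofReal, ← Complex.coe_smul, smul_eq_mul, ← Complex.ofReal_mul] at h3
  have h4 := Complex.ofReal_injective h3
  have := Real.pi_pos
  field_simp at h4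
  linarith

lemma mass_t (ha0 : 0 < a) (ha1 : a < 1) (hb0 : 0 < b)
    (hab : a ^ 2 + b ^ 2 = 1) (hc : a * c = 1 - b) (hc0 : 0 < c) (hc1 : c < 1) (t : ℕ) :
    HasSum (fun n : ℤ => ‖fc (uf a c t) n‖ ^ 2) 2 := by
  rw [← Complex.hasSum_ofReal]
  have h1 := mass_eq ha0 ha1 hb0 hab hc hc0 hc1 t
  have h2 := (Complex.hasSum_ofReal).2 (mass_zero ha0 ha1 hc0 hc1)
  have h3 := (mass_eq ha0 ha1 hb0 hab hc hc0 hc1 0).unique h2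
  rw [h3] at h1
  exact h1

lemma Es_bdd {M : ℝ} (hM0 : 0 ≤ M) (hM : ∀ x, ‖Bf a c x‖ ≤ M) (s x : ℝ) :
    ‖Es a c s x‖ ≤ M * M := by
  unfold Es
  rw [norm_div, norm_mul, RCLike.norm_conj]
  have : ‖Bf a c x‖ * ‖Bf a c (x + s)‖ ≤ M * M :=
    mul_le_mul (hM _) (hM _) (norm_nonneg _) hM0
  have h0 : 0 ≤ M * M := by positivity
  simp
  linarith

lemma Es_tendsto (ha0 : 0 < a) (ha1 : a < 1) (hc0 : 0 < c) (hc1 : c < 1) (ξ x : ℝ) :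
    Tendsto (fun t : ℕ => Es a c (ξ / t) x) atTop (𝓝 (Es a c 0 x)) := by
  have hB := Bf_continuous ha0 ha1 hc0 hc1
  have h : Continuous (fun s => Es a c s x) := by unfold Es; fun_prop
  exact (h.tendsto 0).comp (tendsto_const_div_atTop_nhds_zero_nat ξ)

lemma phase_tendsto (ha0 : 0 < a) (ha1 : a < 1) (ξ x : ℝ) :
    Tendsto (fun t : ℕ => ((t : ℝ) - 1 / 2) * (om a (x + ξ / t) - om a x)) atTop
      (𝓝 (ξ * vv a x)) := by
  have hs := tendsto_const_div_atTop_nhds_zero_nat ξ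
  have h1 : Tendsto (fun t : ℕ => (t : ℝ) * (om a (x + ξ / t) - om a x)) atTop
      (𝓝 (ξ * vv a x)) := by
    by_cases hξ : ξ = 0
    · simp [hξ]
    · have hd := (om_deriv ha0 ha1 x).tendsto_slope_zero
      have hs' : Tendsto (fun t : ℕ => ξ / (t : ℝ)) atTop (𝓝[≠] 0) := by
        refine tendsto_nhdsWithin_iff.2 ⟨hs, ?_⟩
        filter_upwards [eventually_gt_atTop 0] with t ht
        have : (t : ℝ) ≠ 0 := by positivity
        exact div_ne_zero hξ this
      have h2 := (hd.comp hs').const_mul ξ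
      refine h2.congr' ?_
      filter_upwards [eventually_gt_atTop 0] with t ht
      have : (t : ℝ) ≠ 0 := by positivity
      simp only [Function.comp, smul_eq_mul]
      field_simp
  have h2 : Tendsto (fun t : ℕ => (1 / 2 : ℝ) * (om a (x + ξ / t) - om a x)) atTop (𝓝 0) := by
    have hc : Continuous (fun s => (1 / 2 : ℝ) * (om a (x + s) - om a x)) := by
      have := om_continuous (a := a)
      fun_prop
    have := (hc.tendsto 0).comp hs
    simpa [Function.comp_def] using this
  have h3 := h1.sub h2
  rw [sub_zero] at h3
  refine h3.congr fun t => ?_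
  ring

lemma int_tendsto (ha0 : 0 < a) (ha1 : a < 1) (hb0 : 0 < b)
    (hab : a ^ 2 + b ^ 2 = 1) (hc : a * c = 1 - b) (hc0 : 0 < c) (hc1 : c < 1) (ξ : ℝ) :
    Tendsto (fun t : ℕ => ∫ x in (0:ℝ)..(2 * Real.pi),
        starRingEnd ℂ (uf a c t x) * uf a c t (x + ξ / t)) atTop
      (𝓝 (∫ x in (0:ℝ)..(2 * Real.pi), (Dd a b x : ℂ) * (Real.cos (ξ * vv a x) : ℂ))) := by
  obtain ⟨M, hM0, hM⟩ := Bf_bdd ha0 ha1 hc0 hc1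
  have hM2 : 0 ≤ M * M := by positivity
  have ho := om_continuous (a := a)
  have hcos : ∀ y : ℝ, ‖((Real.cos y : ℝ) : ℂ)‖ ≤ 1 := by
    intro y
    rw [Complex.norm_real]
    exact Real.abs_cos_le_one y
  simp only [int_split ha0 ha1 hc0 hc1]
  have h1 : Tendsto (fun t : ℕ => ∫ x in (0:ℝ)..(2 * Real.pi), Es a c (ξ / t) x *
      (Real.cos (((t : ℝ) - 1 / 2) * (om a (x + ξ / t) - om a x)) : ℂ)) atTop
      (𝓝 (∫ x in (0:ℝ)..(2 * Real.pi), (Dd a b x : ℂ) * (Real.cos (ξ * vv a x) : ℂ))) := by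
    refine intervalIntegral.tendsto_integral_filter_of_dominated_convergence (fun _ => M * M)
      ?_ ?_ ?_ ?_
    · refine Eventually.of_forall fun t => ?_
      have := Es_continuous ha0 ha1 hc0 hc1 (ξ / t)
      exact Continuous.aestronglyMeasurable (by fun_prop)
    · refine Eventually.of_forall fun t => Eventually.of_forall fun x _ => ?_
      rw [norm_mul]
      calc _ ≤ (M * M) * 1 := mul_le_mul (Es_bdd hM0 hM _ _) (hcos _) (norm_nonneg _) hM2
        _ = M * M := mul_one _
    · exact intervalIntegrable_const
    · refine Eventually.of_forall fun x _ => ?_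
      rw [← Es_zero ha0 ha1 hb0 hab hc hc0 hc1]
      refine (Es_tendsto ha0 ha1 hc0 hc1 ξ x).mul ?_
      exact ((Complex.continuous_ofReal.comp Real.continuous_cos).tendsto _).comp
        (phase_tendsto ha0 ha1 ξ x)
  have h2 : Tendsto (fun t : ℕ => ∫ x in (0:ℝ)..(2 * Real.pi),
      (Es a c (ξ / t) x - Es a c (ξ / t) (x + Real.pi)) *
      (Real.cos (((t : ℝ) - 1 / 2) * (om a (x + ξ / t) + om a x)) : ℂ)) atTop
      (𝓝 (∫ x in (0:ℝ)..(2 * Real.pi), (0 : ℂ))) := by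
    refine intervalIntegral.tendsto_integral_filter_of_dominated_convergence
      (fun _ => (M * M + M * M) * 1) ?_ ?_ ?_ ?_
    · refine Eventually.of_forall fun t => ?_
      have := Es_continuous ha0 ha1 hc0 hc1 (ξ / t)
      exact Continuous.aestronglyMeasurable (by fun_prop)
    · refine Eventually.of_forall fun t => Eventually.of_forall fun x _ => ?_
      rw [norm_mul]
      refine mul_le_mul ?_ (hcos _) (norm_nonneg _) (by positivity)
      exact (norm_sub_le _ _).trans (add_le_add (Es_bdd hM0 hM _ _) (Es_bdd hM0 hM _ _))
    · exact intervalIntegrable_const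
    · refine Eventually.of_forall fun x _ => ?_
      have h3 := (Es_tendsto ha0 ha1 hc0 hc1 ξ x).sub
        (Es_tendsto ha0 ha1 hc0 hc1 ξ (x + Real.pi))
      rw [Es_zero ha0 ha1 hb0 hab hc hc0 hc1, Es_zero ha0 ha1 hb0 hab hc hc0 hc1, Dd_add_pi,
        sub_self] at h3
      refine squeeze_zero_norm (fun t => ?_) (tendsto_zero_iff_norm_tendsto_zero.1 h3)
      rw [norm_mul]
      exact mul_le_of_le_one_right (norm_nonneg _) (hcos _)
  rw [intervalIntegral.integral_zero] at h2
  have h3 := h1.add (h2.const_mul (1 / 2 : ℂ))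
  rw [mul_zero, add_zero] at h3
  exact h3

end asym

end part4

section part5

def nuM (p : ℤ → ℝ) (t : ℕ) : Measure ℝ :=
  Measure.sum (fun n : ℤ => ENNReal.ofReal (p n) • Measure.dirac ((n : ℝ) / t))

lemma nuM_prob {p : ℤ → ℝ} (hp0 : ∀ n, 0 ≤ p n) (hp : HasSum p 1) (t : ℕ) :
    IsProbabilityMeasure (nuM p t) := by
  constructor
  unfold nuM
  rw [Measure.sum_apply _ MeasurableSet.univ]
  simp only [Measure.smul_apply, measure_univ, smul_eq_mul, mul_one]
  rw [← ENNReal.ofReal_tsum_of_nonneg hp0 hp.summable, hp.tsum_eq, ENNReal.ofReal_one]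

lemma nuM_integral {E : Type*} [NormedAddCommGroup E] [NormedSpace ℝ E] [CompleteSpace E]
    {p : ℤ → ℝ} (hp0 : ∀ n, 0 ≤ p n) (hp : HasSum p 1) (t : ℕ)
    (h : ℝ → E) (hh : Continuous h) [SecondCountableTopology E] {M : ℝ} (hM : ∀ x, ‖h x‖ ≤ M) :
    HasSum (fun n : ℤ => p n • h ((n : ℝ) / t)) (∫ x, h x ∂(nuM p t)) := by
  have := nuM_prob hp0 hp t
  have hi : Integrable h (nuM p t) :=
    Integrable.of_bound hh.aestronglyMeasurable M (ae_of_all _ hM)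
  have := hasSum_integral_measure hi
  have he : (fun n : ℤ => p n • h ((n : ℝ) / t)) = fun n : ℤ =>
      ∫ x, h x ∂(ENNReal.ofReal (p n) • Measure.dirac ((n : ℝ) / t)) := by
    funext n
    rw [integral_smul_measure, integral_dirac, ENNReal.toReal_ofReal (hp0 n)]
  rw [he]
  exact this

def muInf (a b : ℝ) : Measure ℝ :=
  Measure.map (vv a) ((volume.restrict (Set.Ioc 0 (2 * Real.pi))).withDensity
    (fun x => ENNReal.ofReal (Dd a b x / (4 * Real.pi))))

variable {a b c : ℝ}

lemma muInf_integral {E : Type*} [NormedAddCommGroup E] [NormedSpace ℝ E] [CompleteSpace E]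
    (ha0 : 0 < a) (ha1 : a < 1) (hb0 : 0 < b)
    (h : ℝ → E) (hh : Continuous h) [SecondCountableTopology E] :
    ∫ x, h x ∂(muInf a b) = ∫ x in (0:ℝ)..(2 * Real.pi), (Dd a b x / (4 * Real.pi)) • h (vv a x) := by
  have hm : Measurable (fun x => ENNReal.ofReal (Dd a b x / (4 * Real.pi))) :=
    ((Dd_continuous ha0 ha1).div_const _).measurable.ennreal_ofReal
  unfold muInf
  rw [integral_map (vv_continuous ha0 ha1).measurable.aemeasurable hh.aestronglyMeasurable,
    integral_withDensity_eq_integral_toReal_smul hm (ae_of_all _ fun _ => ENNReal.ofReal_lt_top),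
    intervalIntegral.integral_of_le (by positivity)]
  refine integral_congr_ae (ae_of_all _ fun x => ?_)
  have : 0 ≤ Dd a b x / (4 * Real.pi) := div_nonneg (Dd_nonneg ha0 ha1 hb0 x) (by positivity)
  simp only [ENNReal.toReal_ofReal this]

lemma muInf_prob (ha0 : 0 < a) (ha1 : a < 1) (hb0 : 0 < b) (hm2 : ∫ x in (0:ℝ)..(2 * Real.pi), Dd a b x = 4 * Real.pi) :
    IsProbabilityMeasure (muInf a b) := by
  have hm : Measurable (fun x => ENNReal.ofReal (Dd a b x / (4 * Real.pi))) :=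
    ((Dd_continuous ha0 ha1).div_const _).measurable.ennreal_ofReal
  constructor
  unfold muInf
  rw [Measure.map_apply (vv_continuous ha0 ha1).measurable MeasurableSet.univ, Set.preimage_univ,
    withDensity_apply _ MeasurableSet.univ, Measure.restrict_univ]
  rw [← ofReal_integral_eq_lintegral_ofReal]
  · rw [← intervalIntegral.integral_of_le (by positivity), intervalIntegral.integral_div, hm2,
      div_self (by positivity), ENNReal.ofReal_one]
  · exact (((Dd_continuous ha0 ha1).div_const _).integrableOn_Icc).mono_set Set.Ioc_subset_Icc_self
  · exact ae_of_all _ fun x => div_nonneg (Dd_nonneg ha0 ha1 hb0 x) (by positivity)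

lemma int_two_pi {E : Type*} [NormedAddCommGroup E] [NormedSpace ℝ E] (h : ℝ → E) (hh : Continuous h) :
    ∫ x in (0:ℝ)..(2 * Real.pi), h x = ∫ x in (0:ℝ)..Real.pi, (h x + h (x + Real.pi)) := by
  have h2 : Continuous fun x => h (x + Real.pi) := by fun_prop
  rw [intervalIntegral.integral_add (hh.intervalIntegrable _ _) (h2.intervalIntegrable _ _),
    intervalIntegral.integral_comp_add_right (fun x => h x), zero_add, ← two_mul,
    intervalIntegral.integral_add_adjacent_intervals (hh.intervalIntegrable _ _) (hh.intervalIntegrable _ _)]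

lemma muInf_charFun (ha0 : 0 < a) (ha1 : a < 1) (hb0 : 0 < b) (ξ : ℝ) :
    charFun (muInf a b) ξ = ((1 / (4 * Real.pi) : ℝ) : ℂ) *
      ∫ x in (0:ℝ)..(2 * Real.pi), (Dd a b x : ℂ) * (Real.cos (ξ * vv a x) : ℂ) := by
  have hv := vv_continuous ha0 ha1
  have hD := Dd_continuous (b := b) ha0 ha1
  rw [charFun_apply_real, muInf_integral ha0 ha1 hb0 _ (by fun_prop),
    ← intervalIntegral.integral_const_mul, int_two_pi _ (by fun_prop), int_two_pi _ (by fun_prop)]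
  refine intervalIntegral.integral_congr fun x _ => ?_
  simp only [vv_add_pi, Dd_add_pi, Complex.real_smul]
  rw [mul_neg, Real.cos_neg]
  push_cast
  rw [Complex.cos]
  ring_nf

lemma levy (ha0 : 0 < a) (ha1 : a < 1) (hb0 : 0 < b)
    (hab : a ^ 2 + b ^ 2 = 1) (hc : a * c = 1 - b) (hc0 : 0 < c) (hc1 : c < 1)
    (G : ℝ → ℝ) (hG : Continuous G) {M : ℝ} (hM : ∀ x, |G x| ≤ M) :
    Tendsto (fun t : ℕ => ∑' n : ℤ, ‖fc (uf a c t) n‖ ^ 2 * G ((n : ℝ) / t)) atTop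
      (𝓝 ((1 / (2 * Real.pi)) * ∫ x in (0:ℝ)..(2 * Real.pi), Dd a b x * G (vv a x))) := by
  have hp0 : ∀ t : ℕ, ∀ n : ℤ, 0 ≤ ‖fc (uf a c t) n‖ ^ 2 / 2 := fun t n => by positivity
  have hp : ∀ t : ℕ, HasSum (fun n : ℤ => ‖fc (uf a c t) n‖ ^ 2 / 2) 1 := fun t => by
    have := (mass_t ha0 ha1 hb0 hab hc hc0 hc1 t).div_const 2
    rwa [div_self two_ne_zero] at this
  have hm2 := mass_two ha0 ha1 hb0 hab hc hc0 hc1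
  let P : ℕ → ProbabilityMeasure ℝ := fun t => ⟨nuM _ t, nuM_prob (hp0 t) (hp t) t⟩
  let Q : ProbabilityMeasure ℝ := ⟨muInf a b, muInf_prob ha0 ha1 hb0 hm2⟩
  have hPQ : Tendsto P atTop (𝓝 Q) := by
    rw [ProbabilityMeasure.tendsto_iff_tendsto_charFun]
    intro ξ
    have h1 : charFun (Q : Measure ℝ) ξ = _ := muInf_charFun ha0 ha1 hb0 ξ
    rw [h1]
    have h2 := (int_tendsto ha0 ha1 hb0 hab hc hc0 hc1 ξ).const_mul ((1 / (4 * Real.pi) : ℝ) : ℂ)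
    refine h2.congr fun t => ?_
    have h3 : charFun (P t : Measure ℝ) ξ = ∫ x : ℝ, Complex.exp (ξ * x * Complex.I) ∂(nuM _ t) :=
      charFun_apply_real ..
    have h4 := nuM_integral (hp0 t) (hp t) t (fun x : ℝ => Complex.exp (ξ * x * Complex.I)) (by fun_prop)
      (M := 1) (fun x => by rw [← Complex.ofReal_mul, Complex.norm_exp_ofReal_mul_I])
    have h5 := (parseval_shift (uf a c t) (uf_continuous ha0 ha1 hc0 hc1 t) (uf_periodic t) (ξ / t)).mul_left (1 / 2 : ℂ)
    rw [h3]
    refine Eq.trans ?_ (h5.unique (Eq.mp ?_ h4))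
    · rw [Complex.real_smul, ← mul_assoc]; congr 1; push_cast; ring
    · congr 1
      funext n
      rw [Complex.real_smul]
      push_cast
      have : (ξ:ℂ) * (n / t) * Complex.I = n * (ξ / t) * Complex.I := by ring
      rw [this]; ring
  rw [ProbabilityMeasure.tendsto_iff_forall_integral_tendsto] at hPQ
  have h6 := (hPQ (BoundedContinuousFunction.ofNormedAddCommGroup G hG M hM)).const_mul 2
  have h7 : ∫ x, G x ∂(Q : Measure ℝ) = _ := muInf_integral ha0 ha1 hb0 G hG
  simp only [BoundedContinuousFunction.coe_ofNormedAddCommGroup] at h6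
  rw [h7] at h6
  have h8 : (2:ℝ) * ∫ x in (0:ℝ)..(2 * Real.pi), (Dd a b x / (4 * Real.pi)) • G (vv a x) =
      (1 / (2 * Real.pi)) * ∫ x in (0:ℝ)..(2 * Real.pi), Dd a b x * G (vv a x) := by
    rw [← intervalIntegral.integral_const_mul, ← intervalIntegral.integral_const_mul]
    refine intervalIntegral.integral_congr fun x _ => ?_
    simp only [smul_eq_mul]
    field_simp
    ring
  rw [h8] at h6
  refine h6.congr fun t => ?_
  have h9 := (nuM_integral (hp0 t) (hp t) t G hG hM).mul_left 2
  refine h9.tsum_eq.symm.trans (tsum_congr fun n => ?_)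
  simp only [smul_eq_mul]; ring

end part5

section part6

variable {a b c : ℝ}

lemma prob_fold_diff (a b : ℝ) (t : ℕ) (h : ℕ → ℝ) :
    ∑' x : ℕ, prob a b 1 t x * h x - ∑' n : ℕ, ‖fold a b t n‖ ^ 2 * h n =
      ∑ n ∈ Finset.range (t + 1), ‖(psi a b 1 t (n + 1)).2‖ ^ 2 * (h (n + 1) - h n) := by
  have h1 : ∑' x : ℕ, prob a b 1 t x * h x = ∑ x ∈ Finset.range (t + 2), prob a b 1 t x * h x := by
    refine tsum_eq_sum fun x hx => ?_
    rw [Finset.mem_range] at hx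
    simp [prob, psi_support a b t x (by omega)]
  have h2 : ∑' n : ℕ, ‖fold a b t n‖ ^ 2 * h n =
      ∑ n ∈ Finset.range (t + 1), ‖fold a b t n‖ ^ 2 * h n := by
    refine tsum_eq_sum fun x hx => ?_
    rw [Finset.mem_range] at hx
    simp [fold, psi_support a b t x (by omega), psi_support a b t (x + 1) (by omega)]
  have h3 : ∑ x ∈ Finset.range (t + 2), prob a b 1 t x * h x =
      ∑ x ∈ Finset.range (t + 1), ‖(psi a b 1 t x).1‖ ^ 2 * h x +
      ∑ x ∈ Finset.range (t + 1), ‖(psi a b 1 t (x + 1)).2‖ ^ 2 * h (x + 1) := by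
    simp only [prob, add_mul, Finset.sum_add_distrib]
    congr 1
    · rw [Finset.sum_range_succ, psi_support a b t (t + 1) (by omega)]
      simp
    · rw [Finset.sum_range_succ', psiR_zero]
      simp
  rw [h1, h2, h3]
  simp only [norm_fold, add_mul, mul_sub, Finset.sum_add_distrib, Finset.sum_sub_distrib]
  ring

lemma fold_summable (a b : ℝ) (t : ℕ) (h : ℕ → ℝ) :
    Summable (fun n : ℕ => ‖fold a b t n‖ ^ 2 * h n) := by
  refine summable_of_ne_finset_zero (s := Finset.range (t + 1)) fun x hx => ?_
  rw [Finset.mem_range] at hx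
  simp [fold, psi_support a b t x (by omega), psi_support a b t (x + 1) (by omega)]

lemma fold_mass (a b : ℝ) (hab : a ^ 2 + b ^ 2 = 1) (t : ℕ) :
    ∑' n : ℕ, ‖fold a b t n‖ ^ 2 = 1 := by
  have h1 := prob_fold_diff a b t (fun _ => 1)
  simp only [mul_one, sub_self, mul_zero, Finset.sum_const_zero] at h1
  rw [(hasSum_prob a b hab t).tsum_eq] at h1
  linarith

lemma diff_tendsto (a b : ℝ) (hab : a ^ 2 + b ^ 2 = 1) (g : ℝ → ℝ) (hg : Continuous g) :
    Tendsto (fun t : ℕ => ∑' x : ℕ, prob a b 1 t x * g ((x : ℝ) / t)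
      - ∑' n : ℕ, ‖fold a b t n‖ ^ 2 * g ((n : ℝ) / t)) atTop (𝓝 0) := by
  rw [Metric.tendsto_atTop]
  intro ε hε
  have hu := isCompact_Icc.uniformContinuousOn_of_continuous (hg.continuousOn (s := Set.Icc (0:ℝ) 1))
  rw [Metric.uniformContinuousOn_iff] at hu
  obtain ⟨δ, hδ, hu⟩ := hu (ε / 2) (by linarith)
  obtain ⟨N, hN⟩ := exists_nat_gt (1 / δ)
  refine ⟨N + 1, fun t ht => ?_⟩
  have ht0 : (0:ℝ) < t := by
    have : 0 < t := by omega
    exact_mod_cast this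
  have htN : (N:ℝ) < t := by
    have : N < t := by omega
    exact_mod_cast this
  have hd : 1 / (t:ℝ) < δ := by
    rw [div_lt_iff₀ ht0]
    rw [div_lt_iff₀ hδ] at hN
    nlinarith
  rw [dist_zero_right, prob_fold_diff a b t (fun n => g ((n:ℝ) / t)), Real.norm_eq_abs]
  have hle : ∀ n ∈ Finset.range (t + 1), |‖(psi a b 1 t (n + 1)).2‖ ^ 2 *
      (g (((n + 1 : ℕ) : ℝ) / t) - g ((n : ℝ) / t))| ≤ prob a b 1 t (n + 1) * (ε / 2) := by
    intro n hn
    rw [Finset.mem_range] at hn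
    rw [abs_mul, abs_of_nonneg (sq_nonneg _)]
    by_cases hnt : n = t
    · subst hnt
      simp [psi_support a b n (n + 1) (by omega), prob]
    · have hn1 : ((n + 1 : ℕ) : ℝ) ≤ t := by
        have : n + 1 ≤ t := by omega
        exact_mod_cast this
      have h5 := hu (((n + 1 : ℕ) : ℝ) / t) ⟨by positivity, by rw [div_le_one ht0]; exact hn1⟩
        ((n : ℝ) / t) ⟨by positivity, by rw [div_le_one ht0]; push_cast at hn1; linarith⟩
        (by
          rw [Real.dist_eq, ← sub_div]
          push_cast
          rw [add_sub_cancel_left, abs_of_pos (by positivity)]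
          exact hd)
      rw [Real.dist_eq] at h5
      have h6 : ‖(psi a b 1 t (n + 1)).2‖ ^ 2 ≤ prob a b 1 t (n + 1) := by
        unfold prob
        have := sq_nonneg ‖(psi a b 1 t (n + 1)).1‖
        linarith
      exact mul_le_mul h6 h5.le (abs_nonneg _) ((sq_nonneg _).trans h6)
  have hp0 : ∀ x, 0 ≤ prob a b 1 t x := fun x => by unfold prob; positivity
  have hs : ∑ n ∈ Finset.range (t + 1), prob a b 1 t (n + 1) ≤ 1 := by
    have h7 := (hasSum_prob a b hab t).summable.sum_le_tsum (Finset.range (t + 2)) (fun x _ => hp0 x)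
    rw [(hasSum_prob a b hab t).tsum_eq, Finset.sum_range_succ'] at h7
    have := hp0 0
    linarith
  calc _ ≤ _ := Finset.abs_sum_le_sum_abs _ _
    _ ≤ _ := Finset.sum_le_sum hle
    _ = (∑ n ∈ Finset.range (t + 1), prob a b 1 t (n + 1)) * (ε / 2) := by rw [Finset.sum_mul]
    _ ≤ 1 * (ε / 2) := by gcongr
    _ < ε := by linarith

lemma vv_nonneg (ha0 : 0 < a) (x : ℝ) (hx : x ∈ Set.Icc 0 Real.pi) : 0 ≤ vv a x := by
  unfold vv
  have := Real.sin_nonneg_of_mem_Icc hx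
  positivity

lemma fold_tendsto (ha0 : 0 < a) (ha1 : a < 1) (hb0 : 0 < b)
    (hab : a ^ 2 + b ^ 2 = 1) (hc : a * c = 1 - b) (hc0 : 0 < c) (hc1 : c < 1)
    (g : ℝ → ℝ) (hg : Continuous g) {M : ℝ} (hM : ∀ x, |g x| ≤ M) :
    Tendsto (fun t : ℕ => ∑' n : ℕ, ‖fold a b t n‖ ^ 2 * g ((n : ℝ) / t)) atTop
      (𝓝 ((1 / (2 * Real.pi)) * ∫ x in (0:ℝ)..Real.pi, Dd a b x * g (vv a x))) := by
  have hv := vv_continuous ha0 ha1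
  have hD := Dd_continuous (b := b) ha0 ha1
  set G : ℝ → ℝ := fun x => g (max x 0) - g 0 with hGdef
  have hG : Continuous G := by fun_prop
  have hGM : ∀ x, |G x| ≤ M + M := fun x => (abs_sub _ _).trans (add_le_add (hM _) (hM _))
  have hGneg : ∀ x, x ≤ 0 → G x = 0 := fun x hx => by simp [hGdef, max_eq_right hx]
  have hGpos : ∀ x, 0 ≤ x → G x = g x - g 0 := fun x hx => by simp [hGdef, max_eq_left hx]
  have hL := (levy ha0 ha1 hb0 hab hc hc0 hc1 G hG hGM).add_const (g 0)
  have hm := mass_two ha0 ha1 hb0 hab hc hc0 hc1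
  rw [int_two_pi _ hD] at hm
  simp only [Dd_add_pi] at hm
  rw [intervalIntegral.integral_add (hD.intervalIntegrable _ _) (hD.intervalIntegrable _ _)] at hm
  have hlim : (1 / (2 * Real.pi)) * (∫ x in (0:ℝ)..(2 * Real.pi), Dd a b x * G (vv a x)) + g 0 =
      (1 / (2 * Real.pi)) * ∫ x in (0:ℝ)..Real.pi, Dd a b x * g (vv a x) := by
    rw [int_two_pi _ (by fun_prop)]
    have : ∫ x in (0:ℝ)..Real.pi, (Dd a b x * G (vv a x) + Dd a b (x + Real.pi) * G (vv a (x + Real.pi)))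
        = ∫ x in (0:ℝ)..Real.pi, (Dd a b x * g (vv a x) - Dd a b x * g 0) := by
      refine intervalIntegral.integral_congr fun x hx => ?_
      rw [Set.uIcc_of_le Real.pi_pos.le] at hx
      have h0 := vv_nonneg ha0 x hx
      simp only [vv_add_pi, hGneg (-vv a x) (by linarith), hGpos _ h0]
      ring
    rw [this, intervalIntegral.integral_sub (Continuous.intervalIntegrable (by fun_prop) _ _)
      (Continuous.intervalIntegrable (by fun_prop) _ _), intervalIntegral.integral_mul_const]
    have h2 : ∫ x in (0:ℝ)..Real.pi, Dd a b x = 2 * Real.pi := by linarith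
    rw [h2]
    field_simp
    ring
  rw [hlim] at hL
  refine hL.congr fun t => ?_
  have h3 : ∑' n : ℤ, ‖fc (uf a c t) n‖ ^ 2 * G ((n : ℝ) / t) =
      ∑' n : ℕ, ‖fc (uf a c t) (n : ℤ)‖ ^ 2 * G (((n : ℤ) : ℝ) / t) := by
    refine (Function.Injective.tsum_eq (Nat.cast_injective (R := ℤ)) (f := fun n : ℤ => ‖fc (uf a c t) n‖ ^ 2 * G ((n : ℝ) / t)) ?_).symm
    intro n hn
    by_contra hcon
    apply hn
    have hn0 : n ≤ 0 := by
      by_contra hpos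
      exact hcon ⟨n.toNat, by simp; omega⟩
    have : (n:ℝ) / t ≤ 0 := div_nonpos_of_nonpos_of_nonneg (by exact_mod_cast hn0) (by positivity)
    simp [hGneg _ this]
  rw [h3]
  have h4 : ∀ n : ℕ, ‖fc (uf a c t) (n : ℤ)‖ ^ 2 * G (((n : ℤ) : ℝ) / t) =
      ‖fold a b t n‖ ^ 2 * g ((n : ℝ) / t) - ‖fold a b t n‖ ^ 2 * g 0 := by
    intro n
    rw [← fold_eq_fc ha0 ha1 hab hc hc0 hc1 t n, Int.cast_natCast, hGpos _ (by positivity)]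
    ring
  rw [tsum_congr h4, (fold_summable a b t _).tsum_sub (fold_summable a b t (fun _ => g 0)), tsum_mul_right,
    fold_mass a b hab t]
  ring

end part6

section part7

variable {a b c : ℝ}

lemma half_int (h : ℝ → ℝ) (hh : Continuous h) (hs : ∀ x, h (Real.pi - x) = h x) :
    ∫ x in (0:ℝ)..Real.pi, h x = 2 * ∫ x in (0:ℝ)..(Real.pi / 2), h x := by
  rw [← intervalIntegral.integral_add_adjacent_intervals (b := Real.pi / 2)
    (hh.intervalIntegrable _ _) (hh.intervalIntegrable _ _)]
  have h1 := intervalIntegral.integral_comp_sub_left (a := 0) (b := Real.pi / 2) h Real.pi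
  simp only [hs, sub_zero] at h1
  rw [show Real.pi - Real.pi / 2 = Real.pi / 2 by ring] at h1
  rw [← h1]; ring

lemma vv_deriv (ha0 : 0 < a) (ha1 : a < 1) (x : ℝ) :
    HasDerivAt (vv a) (a * Real.cos x * (1 - a ^ 2) /
      ((1 - (a * Real.cos x) ^ 2) * Real.sqrt (1 - (a * Real.cos x) ^ 2))) x := by
  have hw := acos_sq ha0 ha1 x
  have h1 : HasDerivAt (fun x => 1 - (a * Real.cos x) ^ 2)
      (2 * a ^ 2 * Real.cos x * Real.sin x) x := by
    have := (((Real.hasDerivAt_cos x).const_mul a).pow 2).const_sub 1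
    refine this.congr_deriv ?_
    push_cast; ring
  have h2 := h1.sqrt hw.ne'
  have h3 := ((Real.hasDerivAt_sin x).const_mul a).div h2 (Real.sqrt_pos.2 hw).ne'
  refine h3.congr_deriv ?_
  have hq := Real.sq_sqrt hw.le
  have hq0 := Real.sqrt_pos.2 hw
  set q := Real.sqrt (1 - (a * Real.cos x) ^ 2) with hqdef
  have hsc := Real.sin_sq_add_cos_sq x
  rw [← hq]
  field_simp
  rw [hq]
  have : Real.sin x ^ 2 = 1 - Real.cos x ^ 2 := by linarith
  rw [this]; ring

lemma vv_image (ha0 : 0 < a) (ha1 : a < 1) :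
    StrictMonoOn (vv a) (Set.Icc 0 (Real.pi / 2)) ∧
    vv a '' Set.Ico 0 (Real.pi / 2) = Set.Ico 0 a := by
  have hmono : StrictMonoOn (vv a) (Set.Icc 0 (Real.pi / 2)) := by
    refine strictMonoOn_of_deriv_pos (convex_Icc _ _) (vv_continuous ha0 ha1).continuousOn ?_
    intro x hx
    rw [interior_Icc] at hx
    rw [(vv_deriv ha0 ha1 x).deriv]
    have hcos := Real.cos_pos_of_mem_Ioo (x := x) ⟨by linarith [hx.1, Real.pi_pos], hx.2⟩
    have hw := acos_sq ha0 ha1 x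
    have := Real.sqrt_pos.2 hw
    have : 0 < 1 - a ^ 2 := by nlinarith
    positivity
  have hp2 : (0:ℝ) < Real.pi / 2 := by positivity
  have h0 : vv a 0 = 0 := by simp [vv]
  have h1 : vv a (Real.pi / 2) = a := by simp [vv]
  refine ⟨hmono, Set.Subset.antisymm ?_ ?_⟩
  · rintro _ ⟨x, hx, rfl⟩
    constructor
    · rw [← h0]
      exact hmono.monotoneOn ⟨le_rfl, hp2.le⟩ ⟨hx.1, hx.2.le⟩ hx.1
    · conv_rhs => rw [← h1]
      exact hmono ⟨hx.1, hx.2.le⟩ ⟨hp2.le, le_rfl⟩ hx.2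
  · have := intermediate_value_Ico hp2.le (vv_continuous ha0 ha1).continuousOn
    rwa [h0, h1] at this

lemma change_var (ha0 : 0 < a) (ha1 : a < 1) (hb0 : 0 < b) (hab : a ^ 2 + b ^ 2 = 1)
    (k : ℝ) (hk : k * (1 - b) = 2 * b) (f : ℝ → ℝ)
    (hf : ∀ x : ℝ, f x = if 0 ≤ x ∧ x < a then
      k * x ^ 2 / (Real.pi * (1 - x ^ 2) * Real.sqrt (a ^ 2 - x ^ 2)) else 0)
    (g : ℝ → ℝ) (hg : Continuous g) :
    (1 / (2 * Real.pi)) * ∫ x in (0:ℝ)..Real.pi, Dd a b x * g (vv a x) =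
      ∫ x in Set.Ico (0 : ℝ) a, g x * f x := by
  obtain ⟨hmono, him⟩ := vv_image ha0 ha1
  have hv := vv_continuous ha0 ha1
  have hD := Dd_continuous (b := b) ha0 ha1
  rw [half_int _ (by fun_prop) (fun x => by simp [Dd, vv]),
    intervalIntegral.integral_of_le (by positivity), ← integral_Ico_eq_integral_Ioc, ← mul_assoc,
    ← integral_const_mul, ← him,
    integral_image_eq_integral_abs_deriv_smul measurableSet_Ico
      (fun x _ => (vv_deriv ha0 ha1 x).hasDerivWithinAt) (hmono.injOn.mono Set.Ico_subset_Icc_self)]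
  refine setIntegral_congr_fun measurableSet_Ico fun x hx => ?_
  have hmem : vv a x ∈ Set.Ico 0 a := him ▸ Set.mem_image_of_mem _ hx
  have hcos := Real.cos_pos_of_mem_Ioo (x := x) ⟨by linarith [hx.1, Real.pi_pos], hx.2⟩
  have hw := acos_sq ha0 ha1 x
  have hq := Real.sq_sqrt hw.le
  have hq0 := Real.sqrt_pos.2 hw
  have hb2 : 1 - a ^ 2 = b ^ 2 := by linarith
  have hb1 : 0 < 1 - b := by nlinarith
  have hkk : k = 2 * b / (1 - b) := by field_simp; exact hk
  have hsc : Real.sin x ^ 2 = 1 - Real.cos x ^ 2 := by linarith [Real.sin_sq_add_cos_sq x]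
  have hv2 : (vv a x) ^ 2 = a ^ 2 * Real.sin x ^ 2 / (1 - (a * Real.cos x) ^ 2) := by
    rw [vv, div_pow, hq, mul_pow]
  have e1 : 1 - (vv a x) ^ 2 = b ^ 2 / (1 - (a * Real.cos x) ^ 2) := by
    rw [hv2, ← hb2, hsc, eq_div_iff hw.ne', sub_mul, div_mul_cancel₀ _ hw.ne']; ring
  have e2 : Real.sqrt (a ^ 2 - (vv a x) ^ 2) =
      a * Real.cos x * b / Real.sqrt (1 - (a * Real.cos x) ^ 2) := by
    rw [← Real.sqrt_sq (show 0 ≤ a * Real.cos x * b / Real.sqrt (1 - (a * Real.cos x) ^ 2) by positivity)]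
    congr 1
    rw [hv2, div_pow, hq, mul_pow _ b, ← hb2, hsc, eq_div_iff hw.ne', sub_mul, div_mul_cancel₀ _ hw.ne']; ring
  simp only [smul_eq_mul]
  rw [hf, if_pos ⟨hmem.1, hmem.2⟩, e1, e2, hv2, hb2, hkk, abs_of_nonneg (by positivity), Dd]
  set q := Real.sqrt (1 - (a * Real.cos x) ^ 2) with hqdef
  rw [← hq]
  have ha2 : a ^ 2 = (1 - b) * (1 + b) := by linarith
  field_simp
  rw [ha2]
  ring

end part7

/-- Weak convergence theorem, Case (A): with `s = +1`, `X_t/t` converges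
weakly to the distribution with density `f_κ`: for every bounded continuous `g : ℝ → ℝ`,
`lim_{t→∞} ∑_{x∈ℤ₊} P(X_t = x)·g(x/t) = ∫_0^a g(x)·f_κ(x) dx`. -/
theorem half_line_caseA_weak_convergence
    (κ : ℕ) (hκ : 3 ≤ κ) (a b : ℝ)
    (ha : a = 2 * Real.sqrt ((κ : ℝ) - 1) / κ) (hb : b = ((κ : ℝ) - 2) / κ)
    (f : ℝ → ℝ)
    (hf : ∀ x : ℝ, f x = if 0 ≤ x ∧ x < a then
      ((κ : ℝ) - 2) * x ^ 2 / (Real.pi * (1 - x ^ 2) * Real.sqrt (a ^ 2 - x ^ 2)) else 0)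
    (g : ℝ → ℝ) (hg : Continuous g) (hgbd : ∃ M : ℝ, ∀ x : ℝ, |g x| ≤ M) :
    Tendsto (fun t : ℕ => ∑' x : ℕ, prob a b 1 t x * g ((x : ℝ) / (t : ℝ)))
      atTop (𝓝 (∫ x in Set.Ico (0 : ℝ) a, g x * f x)) := by
  have hκ3 : (3:ℝ) ≤ κ := by exact_mod_cast hκ
  have hκ0 : (0:ℝ) < κ := by linarith
  have hs0 : 0 < Real.sqrt ((κ:ℝ) - 1) := Real.sqrt_pos.2 (by linarith)
  have hs2 : Real.sqrt ((κ:ℝ) - 1) ^ 2 = (κ:ℝ) - 1 := Real.sq_sqrt (by linarith)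
  have ha0 : 0 < a := by rw [ha]; positivity
  have hb0 : 0 < b := by rw [hb]; exact div_pos (by linarith) hκ0
  have hab : a ^ 2 + b ^ 2 = 1 := by
    rw [ha, hb, div_pow, div_pow, mul_pow, hs2]
    field_simp
    ring
  have ha1 : a < 1 := by nlinarith
  have hb1 : b < 1 := by nlinarith
  have hc : a * ((1 - b) / a) = 1 - b := by field_simp
  have hc0 : 0 < (1 - b) / a := div_pos (by linarith) ha0
  have hc1 : (1 - b) / a < 1 := by
    rw [div_lt_one ha0]
    nlinarith
  have hk : ((κ:ℝ) - 2) * (1 - b) = 2 * b := by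
    rw [hb]
    field_simp
    ring
  obtain ⟨M, hM⟩ := hgbd
  have h1 := fold_tendsto ha0 ha1 hb0 hab hc hc0 hc1 g hg hM
  have h2 := (diff_tendsto a b hab g hg).add h1
  rw [zero_add, change_var ha0 ha1 hb0 hab _ hk f hf g hg] at h2
  refine h2.congr fun t => ?_
  ring

end
end
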